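/- arXiv:2512.23287 — 3 statements merged into one kernel-verified Lean document; each statement's English description precedes it below -/
import Mathlib

section
/- Let n ∈ ℕ, n ≥ 1, and let k ∈ ℕ with k ≥ 2. Let f : ℝ^n → ℝ be k-times continuously differentiable, and assume |∇^j f|**(t) < ∞ for all t > 0 and all j ∈ {0,…,k}, and lim_{t→∞} |∇^j f|**(t) = 0 for each j ∈ {0,…,k−1}. Then for every t > 0: f**(t) − f*(t) ≤ (n^{(3/2)k − 2}/(k−2)!)·t^{1/n}·∫_t^∞ s^{(k−1)/n − 1}·|∇^k f|**(s) ds. -/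
/-!
The estimate rests on a first-order inequality, `‖F‖** - ‖F‖* ≤ t^{1/n} ‖DF‖**`, valid for every
`C¹` map `F` into a Banach space for which both averages are finite (`dstarR_norm_le`). With
`l = ‖F‖*(t)` and `A = {‖F‖ > l}`, the left-hand side is at most `t⁻¹ ∫ (‖F‖ - l)₊`, and `|A| ≤ t`.
Along each line parallel to a coordinate axis, `(‖F‖ - l)₊` is controlled by the integral of `‖DF‖`
over the part of the line in `A`; the grid-lines lemma behind the Gagliardo–Nirenberg–Sobolev
inequality and Hölder's inequality give `∫ (‖F‖ - l)₊ ≤ |A|^{1/n} ∫_A ‖DF‖`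
(`lintegral_norm_sub_le`), and the Hardy–Littlewood inequality bounds `∫_A ‖DF‖` by `t ‖DF‖**(t)`.
Working along lines avoids differentiating the norm of `F`, which need not be smooth. A line
contained in `A` is handled by adding a constant `ε` to the density `‖DF‖`, so that its integral over
the line is infinite, and letting `ε → 0`.

Since `g**` has derivative `-(g** - g*) / s`, the first-order inequality integrates to
`|∇^j f|**(t) ≤ ∫_t^∞ s^{1/n - 1} |∇^{j+1} f|**(s) ds` for `j < k`, because the averages tend to zero
at infinity (`dstarR_norm_le_lintegral`). Iterating this from `j = 1` to `j = k - 1` with Tonelli's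
theorem (`iterate_averaging`) and applying the first-order inequality once more to `f` proves the
estimate with the constant `n^{k-2} / (k-2)!`, which is at most the one stated.
-/

open MeasureTheory Set Filter Topology
open scoped ENNReal

noncomputable section

/-- The non-increasing rearrangement of an `ℝ≥0∞`-valued function with respect to `μ`. -/
def rearr {α : Type*} [MeasurableSpace α] (μ : Measure α) (f : α → ℝ≥0∞) (t : ℝ) : ℝ≥0∞ :=
  sInf {l : ℝ≥0∞ | μ {x | l < f x} ≤ ENNReal.ofReal t}

/-- The non-increasing rearrangement `f*` of a real-valued function. -/
def rearrR {α : Type*} [MeasurableSpace α] (μ : Measure α) (f : α → ℝ) : ℝ → ℝ≥0∞ :=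
  rearr μ fun x => ENNReal.ofReal |f x|

/-- The maximal non-increasing rearrangement `f**(t) = (1/t) ∫_0^t f*(s) ds`. -/
def dstarR {α : Type*} [MeasurableSpace α] (μ : Measure α) (f : α → ℝ) (t : ℝ) : ℝ≥0∞ :=
  ENNReal.ofReal (1 / t) * ∫⁻ s in Ioc (0 : ℝ) t, rearrR μ f s

/-- The oscillation `f**(t) - f*(t)`. -/
def oscR {α : Type*} [MeasurableSpace α] (μ : Measure α) (f : α → ℝ) (t : ℝ) : ℝ≥0∞ :=
  dstarR μ f t - rearrR μ f t

/-- The quasinorm of the classical Lorentz space `S^p(w)`. -/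
def SNorm {α : Type*} [MeasurableSpace α] (μ : Measure α) (p : ℝ) (w : ℝ → ℝ≥0∞)
    (f : α → ℝ) : ℝ≥0∞ :=
  (∫⁻ t in Ioi (0 : ℝ), oscR μ f t ^ p * w t) ^ (1 / p)

/-- The quasinorm of the classical Lorentz space `Λ^p(w)`. -/
def LambdaNorm {α : Type*} [MeasurableSpace α] (μ : Measure α) (p : ℝ) (w : ℝ → ℝ≥0∞)
    (f : α → ℝ) : ℝ≥0∞ :=
  (∫⁻ t in Ioi (0 : ℝ), rearrR μ f t ^ p * w t) ^ (1 / p)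

/-- Rearrangement with respect to Lebesgue measure on `(0,∞)`,
for `ℝ≥0∞`-valued functions. -/
def rearrL (g : ℝ → ℝ≥0∞) : ℝ → ℝ≥0∞ :=
  rearr (volume.restrict (Ioi (0 : ℝ))) g

/-- The quasinorm of `Λ^p(w)` over `(0,∞)`, for `ℝ≥0∞`-valued functions. -/
def LambdaNormE (p : ℝ) (w : ℝ → ℝ≥0∞) (g : ℝ → ℝ≥0∞) : ℝ≥0∞ :=
  (∫⁻ t in Ioi (0 : ℝ), rearrL g t ^ p * w t) ^ (1 / p)

/-- The operator `T`, `(Tg)(t) = ∫_0^{1/t} g(s) ds − (1/t) g(1/t)`. -/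
def TopE (g : ℝ → ℝ≥0∞) (t : ℝ) : ℝ≥0∞ :=
  (∫⁻ s in Ioc (0 : ℝ) (1 / t), g s) - ENNReal.ofReal (1 / t) * g (1 / t)

/-- The weight `w̃(t) = t^{p-2} w(1/t)`. -/
def tildeW (p : ℝ) (w : ℝ → ℝ≥0∞) (t : ℝ) : ℝ≥0∞ :=
  ENNReal.ofReal t ^ (p - 2) * w (1 / t)

/-! ### The truncated Sobolev inequality -/

theorem enorm_sub_le_lintegral_deriv {V : Type*} [NormedAddCommGroup V] [NormedSpace ℝ V]
    [CompleteSpace V] {φ : ℝ → V} (hφ : ContDiff ℝ 1 φ) {a b : ℝ} (hab : a ≤ b) :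
    ‖φ b - φ a‖ₑ ≤ ∫⁻ s in Ioo a b, ‖deriv φ s‖ₑ := by
  have hd : Continuous (deriv φ) := hφ.continuous_deriv le_rfl
  rw [← intervalIntegral.integral_deriv_eq_sub
    (fun x _ => (hφ.differentiable one_ne_zero).differentiableAt) (hd.intervalIntegrable _ _),
    intervalIntegral.integral_of_le hab, ← restrict_Ioo_eq_restrict_Ioc]
  exact enorm_integral_le_lintegral_enorm _

/-- The excess of `‖φ‖` over the level `l` at a point is at most the integral of `D + ε` over the
superlevel set `{l < ‖φ‖}`: move from `x` to the nearest point of `{‖φ‖ ≤ l}`. If there is no such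
point, the superlevel set is the whole line and the summand `ε` makes the right-hand side infinite;
this is what `ε` is for. -/
theorem ofReal_norm_sub_le_lintegral_line {V : Type*} [NormedAddCommGroup V] [NormedSpace ℝ V]
    [CompleteSpace V] {φ : ℝ → V} (hφ : ContDiff ℝ 1 φ) {D : ℝ → ℝ≥0∞}
    (hD : ∀ s, ‖deriv φ s‖ₑ ≤ D s) (l : ℝ) {ε : ℝ≥0∞} (hε : ε ≠ 0) (x : ℝ) :
    ENNReal.ofReal (‖φ x‖ - l) ≤
      ∫⁻ s, indicator {s | l < ‖φ s‖} (fun s => D s + ε) s := by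
  have hc : Continuous fun s => ‖φ s‖ := hφ.continuous.norm
  have hmeas : MeasurableSet {s | l < ‖φ s‖} := (isOpen_lt continuous_const hc).measurableSet
  rw [lintegral_indicator hmeas]
  by_cases hx : ‖φ x‖ ≤ l
  · simp [ENNReal.ofReal_eq_zero.2 (sub_nonpos.2 hx)]
  push Not at hx
  -- on an interval inside the superlevel set the fundamental theorem of calculus applies
  have key : ∀ a b y, a ≤ b → Ioo a b ⊆ {s | l < ‖φ s‖} → ‖φ y‖ ≤ l →
      ‖φ x - φ y‖ₑ = ‖φ b - φ a‖ₑ →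
      ENNReal.ofReal (‖φ x‖ - l) ≤ ∫⁻ s in {s | l < ‖φ s‖}, (D s + ε) := by
    intro a b y hab hsub hy heq
    calc ENNReal.ofReal (‖φ x‖ - l) ≤ ENNReal.ofReal ‖φ x - φ y‖ := by
          apply ENNReal.ofReal_le_ofReal
          linarith [norm_sub_norm_le (φ x) (φ y)]
      _ = ‖φ b - φ a‖ₑ := by rw [ofReal_norm, heq]
      _ ≤ ∫⁻ s in Ioo a b, ‖deriv φ s‖ₑ := enorm_sub_le_lintegral_deriv hφ hab
      _ ≤ ∫⁻ s in Ioo a b, (D s + ε) :=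
          lintegral_mono fun s => (hD s).trans le_self_add
      _ ≤ _ := lintegral_mono_set hsub
  by_cases hall : ∃ y, ‖φ y‖ ≤ l
  · obtain ⟨y, hy⟩ := hall
    have hcl : IsClosed {s | ‖φ s‖ ≤ l} := isClosed_le hc continuous_const
    rcases le_total y x with hyx | hxy
    · obtain ⟨z, ⟨hz, hzl⟩, hmax⟩ :=
        (isCompact_Icc.inter_right hcl : IsCompact (Icc y x ∩ _)).exists_isGreatest
          ⟨y, ⟨le_rfl, hyx⟩, hy⟩
      refine key z x z hz.2 (fun s hs => ?_) hzl rfl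
      by_contra hs'
      have : s ≤ z := hmax ⟨⟨hz.1.trans hs.1.le, hs.2.le⟩, (not_lt.1 hs' : ‖φ s‖ ≤ l)⟩
      exact absurd hs.1 (not_lt.2 this)
    · obtain ⟨z, ⟨hz, hzl⟩, hmin⟩ :=
        (isCompact_Icc.inter_right hcl : IsCompact (Icc x y ∩ _)).exists_isLeast
          ⟨y, ⟨hxy, le_rfl⟩, hy⟩
      refine key x z z hz.1 (fun s hs => ?_) hzl (enorm_sub_rev _ _)
      by_contra hs'
      have : z ≤ s := hmin ⟨⟨hs.1.le, hs.2.le.trans hz.2⟩, (not_lt.1 hs' : ‖φ s‖ ≤ l)⟩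
      exact absurd hs.2 (not_lt.2 this)
  · push Not at hall
    have : {s | l < ‖φ s‖} = univ := eq_univ_of_forall hall
    rw [this, Measure.restrict_univ]
    calc _ ≤ (⊤ : ℝ≥0∞) := le_top
      _ = ∫⁻ _ : ℝ, ε := by simp [hε]
      _ ≤ _ := lintegral_mono fun s => le_add_self

/-- The truncated Gagliardo–Nirenberg–Sobolev inequality with gradient density `‖DF‖ + ε` on the
superlevel set `A = {l < ‖F‖}`. The line estimate holds along every line parallel to an axis, so the
grid-lines lemma bounds the `L^{n/(n-1)}` norm of `(‖F‖ - l)₊` by the integral of the density, and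
Hölder's inequality on `A` produces the factor `|A|^{1/n}`. -/
theorem lintegral_norm_sub_le_aux {n : ℕ} (hn : 1 ≤ n) {V : Type*} [NormedAddCommGroup V]
    [NormedSpace ℝ V] [CompleteSpace V] {F : EuclideanSpace ℝ (Fin n) → V} (hF : ContDiff ℝ 1 F)
    (l : ℝ) {ε : ℝ≥0∞} (hε : ε ≠ 0) :
    ∫⁻ x, ENNReal.ofReal (‖F x‖ - l) ≤
      volume {x | l < ‖F x‖} ^ (1 / (n : ℝ)) * ∫⁻ x in {x | l < ‖F x‖}, (‖fderiv ℝ F x‖ₑ + ε) := by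
  have hc : Continuous fun s => ‖F s‖ := hF.continuous.norm
  have hmeas : MeasurableSet {s | l < ‖F s‖} := (isOpen_lt continuous_const hc).measurableSet
  set A := {s | l < ‖F s‖} with hA
  set w : EuclideanSpace ℝ (Fin n) → ℝ≥0∞ := A.indicator (fun x => ‖fderiv ℝ F x‖ₑ + ε) with hw
  have hwm : Measurable w :=
    (((hF.continuous_fderiv one_ne_zero).enorm.measurable).add_const ε).indicator hmeas
  have hmp := PiLp.volume_preserving_toLp (Fin n)
  have hline : ∀ (x : Fin n → ℝ) i, ENNReal.ofReal (‖F (WithLp.toLp 2 x)‖ - l) ≤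
      ∫⁻ s, w (WithLp.toLp 2 (Function.update x i s)) := by
    intro x i
    set φ : ℝ → V := fun s => F (WithLp.toLp 2 (Function.update x i s)) with hφ
    have hu : ∀ s, HasDerivAt (fun s => WithLp.toLp 2 (Function.update x i s))
        (EuclideanSpace.single i (1 : ℝ)) s := fun s =>
      ((PiLp.continuousLinearEquiv 2 ℝ (fun _ : Fin n => ℝ)).symm.toContinuousLinearMap.hasFDerivAt.comp_hasDerivAt
        s (hasDerivAt_update x i s))
    have hφd : ∀ s, HasDerivAt φ (fderiv ℝ F (WithLp.toLp 2 (Function.update x i s))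
        (EuclideanSpace.single i (1 : ℝ))) s := fun s =>
      ((hF.differentiable one_ne_zero) _).hasFDerivAt.comp_hasDerivAt s (hu s)
    have hφc : ContDiff ℝ 1 φ := by
      refine hF.comp ?_
      exact (PiLp.continuousLinearEquiv 2 ℝ (fun _ : Fin n => ℝ)).symm.contDiff.comp
        (contDiff_update 1 x i)
    have := ofReal_norm_sub_le_lintegral_line hφc
      (D := fun s => ‖fderiv ℝ F (WithLp.toLp 2 (Function.update x i s))‖ₑ) (fun s => by
        rw [(hφd s).deriv, ← ofReal_norm, ← ofReal_norm]
        apply ENNReal.ofReal_le_ofReal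
        refine (ContinuousLinearMap.le_opNorm _ _).trans ?_
        simp) l hε (x i)
    refine (le_of_eq (by simp [hφ])).trans (this.trans_eq (lintegral_congr fun s => rfl))
  rw [← lintegral_indicator hmeas, ← hmp.lintegral_comp hwm,
    ← hmp.lintegral_comp (hc.measurable.sub_const l).ennreal_ofReal, ← hmp.measure_preimage hmeas.nullMeasurableSet]
  have hwm' : Measurable fun x => w (WithLp.toLp 2 x) := hwm.comp hmp.measurable
  set u : (Fin n → ℝ) → ℝ≥0∞ := fun x => ENNReal.ofReal (‖F (WithLp.toLp 2 x)‖ - l) with hu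
  have hum : Measurable u := (hc.measurable.sub_const l).ennreal_ofReal.comp hmp.measurable
  set B : Set (Fin n → ℝ) := WithLp.toLp 2 ⁻¹' A with hB
  have hBm : MeasurableSet B := hmp.measurable hmeas
  have huB : ∀ x, u x = u x * B.indicator 1 x := by
    intro x
    by_cases hx : x ∈ B
    · simp [hx]
    · have : ‖F (WithLp.toLp 2 x)‖ ≤ l := not_lt.1 hx
      simp [hx, hu, this]
  -- the grid-lines lemma requires `1 < n`; for `n = 1` the line estimate itself suffices
  rcases hn.eq_or_lt with rfl | hn
  · calc ∫⁻ x, u x = ∫⁻ x, u x * B.indicator 1 x := lintegral_congr huB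
      _ ≤ ∫⁻ x, (∫⁻ y, w (WithLp.toLp 2 y)) * B.indicator 1 x := by
          refine lintegral_mono fun x => mul_le_mul_left ?_ _
          refine (hline x 0).trans_eq ?_
          refine Eq.trans (lintegral_congr fun s => ?_)
            ((volume_preserving_funUnique (Fin 1) ℝ).symm.lintegral_comp hwm')
          congr 2
          ext j
          simp [Subsingleton.elim j 0]
      _ = _ := by
          rw [lintegral_const_mul _ (measurable_one.indicator hBm), lintegral_indicator_one hBm,
            mul_comm]
          simp
  · have hn1 : (1 : ℝ) < n := by exact_mod_cast hn
    have hpq : Real.HolderConjugate (n : ℝ) (Real.conjExponent n) := .conjExponent hn1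
    set p := Real.conjExponent n with hp
    have hgrid := lintegral_prod_lintegral_pow_le (fun _ : Fin n => (volume : Measure ℝ)) (p := p)
      (by simpa using hpq) hwm'
    have hup : ∫⁻ x, u x ^ p ≤ (∫⁻ y, w (WithLp.toLp 2 y)) ^ p := by
      refine le_trans (lintegral_mono fun x => ?_) hgrid
      calc u x ^ p = ∏ i : Fin n, u x ^ (1 / ((n : ℝ) - 1)) := by
            rw [Finset.prod_const, Finset.card_univ, Fintype.card_fin, ← ENNReal.rpow_mul_natCast]
            congr 1
            rw [hp, Real.conjExponent]; ring
        _ ≤ _ := by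
            simp only [Fintype.card_fin]
            refine Finset.prod_le_prod' fun i _ => ENNReal.rpow_le_rpow (hline x i) ?_
            have : 0 < (n : ℝ) - 1 := by linarith
            positivity
    calc ∫⁻ x, u x = ∫⁻ x, (u * B.indicator (1 : (Fin n → ℝ) → ℝ≥0∞)) x := lintegral_congr huB
      _ ≤ (∫⁻ x, u x ^ p) ^ (1 / p) * (∫⁻ x, B.indicator (1 : (Fin n → ℝ) → ℝ≥0∞) x ^ (n : ℝ)) ^ (1 / (n : ℝ)) :=
          ENNReal.lintegral_mul_le_Lp_mul_Lq _ hpq.symm hum.aemeasurable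
            (measurable_one.indicator hBm).aemeasurable
      _ ≤ (∫⁻ y, w (WithLp.toLp 2 y)) * volume B ^ (1 / (n : ℝ)) := by
          gcongr
          · rw [one_div, ENNReal.rpow_inv_le_iff hpq.symm.pos]
            exact hup
          · rw [← lintegral_indicator_one hBm]
            refine lintegral_mono fun x => ?_
            by_cases hx : x ∈ B
            · simp [hx]
            · simp [hx, show n ≠ 0 by lia]
      _ = _ := mul_comm _ _

/-- The truncated Sobolev inequality with constant one, obtained by letting `ε → 0`. No decay or
compact support of `F` is needed beyond the finiteness of the measure of the superlevel set. -/
theorem lintegral_norm_sub_le {n : ℕ} (hn : 1 ≤ n) {V : Type*} [NormedAddCommGroup V]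
    [NormedSpace ℝ V] [CompleteSpace V] {F : EuclideanSpace ℝ (Fin n) → V} (hF : ContDiff ℝ 1 F)
    (l : ℝ) (hl : volume {x | l < ‖F x‖} ≠ ∞) :
    ∫⁻ x, ENNReal.ofReal (‖F x‖ - l) ≤
      volume {x | l < ‖F x‖} ^ (1 / (n : ℝ)) * ∫⁻ x in {x | l < ‖F x‖}, ‖fderiv ℝ F x‖ₑ := by
  set A := {x | l < ‖F x‖}
  have hlim : Tendsto (fun ε : ℝ≥0∞ => volume A ^ (1 / (n : ℝ)) *
      ((∫⁻ x in A, ‖fderiv ℝ F x‖ₑ) + ε * volume A)) (𝓝[>] 0)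
      (𝓝 (volume A ^ (1 / (n : ℝ)) * ((∫⁻ x in A, ‖fderiv ℝ F x‖ₑ) + 0 * volume A))) := by
    refine Tendsto.mono_left ?_ nhdsWithin_le_nhds
    refine ENNReal.Tendsto.const_mul ?_ (Or.inr (by finiteness))
    refine tendsto_const_nhds.add (ENNReal.Tendsto.mul_const tendsto_id (Or.inr hl))
  rw [zero_mul, add_zero] at hlim
  refine ge_of_tendsto hlim ?_
  filter_upwards [self_mem_nhdsWithin] with ε hε
  have := lintegral_norm_sub_le_aux hn hF l (ε := ε) (ne_of_gt hε)
  rwa [lintegral_add_right _ measurable_const, setLIntegral_const] at this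

/-! ### Rearrangements and their averages -/

theorem rearr_antitone {α : Type*} [MeasurableSpace α] (μ : Measure α) (f : α → ℝ≥0∞) :
    Antitone (rearr μ f) := fun _ _ hst =>
  sInf_le_sInf fun _ hl => le_trans hl (ENNReal.ofReal_le_ofReal hst)

/-- The infimum defining `rearr` is attained, by continuity of the measure from below. -/
theorem measure_rearr_lt_le {α : Type*} [MeasurableSpace α] (μ : Measure α) (f : α → ℝ≥0∞)
    (t : ℝ) : μ {x | rearr μ f t < f x} ≤ ENNReal.ofReal t := by
  set S := {l : ℝ≥0∞ | μ {x | l < f x} ≤ ENNReal.ofReal t} with hS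
  have hne : S.Nonempty := ⟨⊤, by simp [hS]⟩
  obtain ⟨u, hu, hlim, hmem⟩ := exists_seq_tendsto_sInf hne (OrderBot.bddBelow S)
  have hsub : {x | rearr μ f t < f x} ⊆ ⋃ i, {x | u i < f x} := by
    intro x hx
    obtain ⟨i, hi⟩ := (hlim.eventually (gt_mem_nhds (show sInf S < f x from hx))).exists
    exact mem_iUnion.2 ⟨i, hi⟩
  refine (measure_mono hsub).trans ?_
  have hmono : Monotone fun i => {x | u i < f x} :=
    fun i j hij x (hx : u i < f x) => (hu hij).trans_lt hx
  rw [hmono.measure_iUnion]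
  exact iSup_le hmem

/-- Together with `le_rearr_of_ofReal_lt`, the duality between the rearrangement and the
distribution function. -/
theorem ofReal_lt_of_lt_rearr {α : Type*} [MeasurableSpace α] {μ : Measure α} {f : α → ℝ≥0∞}
    {s : ℝ} {l : ℝ≥0∞} (h : l < rearr μ f s) : ENNReal.ofReal s < μ {x | l < f x} :=
  lt_of_not_ge fun hle => not_le.2 h (sInf_le hle)

theorem le_rearr_of_ofReal_lt {α : Type*} [MeasurableSpace α] {μ : Measure α} {f : α → ℝ≥0∞}
    {s : ℝ} {l : ℝ≥0∞} (h : ENNReal.ofReal s < μ {x | l < f x}) : l ≤ rearr μ f s := by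
  refine le_sInf fun l' hl' => ?_
  by_contra hlt
  exact absurd (h.trans_le ((measure_mono fun x (hx : l < f x) => (not_le.1 hlt).trans hx).trans hl'))
    (lt_irrefl _)

theorem volume_pos_ofReal_lt_le (m : ℝ≥0∞) :
    volume {s : ℝ | 0 < s ∧ ENNReal.ofReal s < m} ≤ m := by
  by_cases hm : m = ∞
  · simp [hm]
  calc volume {s : ℝ | 0 < s ∧ ENNReal.ofReal s < m} ≤ volume (Ioo 0 m.toReal) :=
        measure_mono fun s hs => ⟨hs.1, (ENNReal.ofReal_lt_iff_lt_toReal hs.1.le hm).1 hs.2⟩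
    _ = m := by simp [hm]

section Rearrangement

variable {α : Type*} [MeasurableSpace α] {μ : Measure α} {g : α → ℝ}

theorem rearrR_antitone : Antitone (rearrR μ g) := rearr_antitone _ _

theorem mul_rearrR_le (t : ℝ) :
    ENNReal.ofReal t * rearrR μ g t ≤ ∫⁻ s in Ioc 0 t, rearrR μ g s := by
  calc ENNReal.ofReal t * rearrR μ g t = ∫⁻ _ in Ioc 0 t, rearrR μ g t := by
        simp [mul_comm]
    _ ≤ _ := setLIntegral_mono (rearrR_antitone.measurable) fun s hs => rearrR_antitone hs.2

theorem lintegral_rearrR_ne_top (hfin : ∀ t > 0, dstarR μ g t ≠ ∞) {t : ℝ} (ht : 0 < t) :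
    ∫⁻ s in Ioc 0 t, rearrR μ g s ≠ ∞ := by
  intro h
  apply hfin t ht
  rw [dstarR, h, ENNReal.mul_top]
  simpa using ht

theorem rearrR_ne_top (hfin : ∀ t > 0, dstarR μ g t ≠ ∞) {t : ℝ} (ht : 0 < t) :
    rearrR μ g t ≠ ∞ := by
  intro h
  have := mul_rearrR_le (μ := μ) (g := g) t
  rw [h, ENNReal.mul_top (by simpa using ht), top_le_iff] at this
  exact lintegral_rearrR_ne_top hfin ht this

theorem measurable_dstarR : Measurable (dstarR μ g) := by
  refine Measurable.mul (by fun_prop) (Monotone.measurable fun a b hab => ?_)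
  exact lintegral_mono_set (Ioc_subset_Ioc_right hab)

/-- Half of equimeasurability: above the level `g*(t)`, the rearrangement carries no more mass
than the function. -/
theorem lintegral_rearrR_le (hg : Measurable g) (hg0 : ∀ x, 0 ≤ g x)
    (hfin : ∀ t > 0, dstarR μ g t ≠ ∞) {t : ℝ} (ht : 0 < t) :
    ∫⁻ s in Ioc 0 t, rearrR μ g s ≤ ENNReal.ofReal t * rearrR μ g t +
      ∫⁻ x, ENNReal.ofReal (g x - (rearrR μ g t).toReal) ∂μ := by
  set c := (rearrR μ g t).toReal with hc
  have hcof : ENNReal.ofReal c = rearrR μ g t := ENNReal.ofReal_toReal (rearrR_ne_top hfin ht)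
  have hqm : Measurable (rearrR μ g) := rearrR_antitone.measurable
  have h1 : ∫⁻ s in Ioc 0 t, rearrR μ g s ≤ ENNReal.ofReal t * rearrR μ g t +
      ∫⁻ s in Ioc 0 t, ENNReal.ofReal ((rearrR μ g s).toReal - c) := by
    calc ∫⁻ s in Ioc 0 t, rearrR μ g s
        ≤ ∫⁻ s in Ioc 0 t, (rearrR μ g t + ENNReal.ofReal ((rearrR μ g s).toReal - c)) := by
          refine setLIntegral_mono (by fun_prop) fun s hs => ?_
          rw [ENNReal.ofReal_sub _ ENNReal.toReal_nonneg, hcof,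
            ENNReal.ofReal_toReal (rearrR_ne_top hfin hs.1)]
          exact le_add_tsub
      _ = _ := by
          rw [lintegral_add_left measurable_const, setLIntegral_const]
          simp [mul_comm]
  refine h1.trans (add_le_add_right ?_ _)
  have h2 : ∫⁻ x, ENNReal.ofReal (g x - c) ∂μ = ∫⁻ x, ENNReal.ofReal (max (g x - c) 0) ∂μ := by
    refine lintegral_congr fun x => ?_
    rw [ENNReal.ofReal_max]; simp
  rw [h2, lintegral_eq_lintegral_meas_lt, lintegral_eq_lintegral_meas_lt]
  rotate_left
  · exact ae_of_all _ fun x => le_max_right _ _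
  · exact ((hg.sub_const c).max measurable_const).aemeasurable
  · refine (ae_restrict_iff' measurableSet_Ioc).2 (ae_of_all _ fun s hs => ?_)
    exact sub_nonneg.2 (ENNReal.toReal_mono (rearrR_ne_top hfin hs.1) (rearrR_antitone hs.2))
  · exact (hqm.ennreal_toReal.sub_const c).aemeasurable
  refine setLIntegral_mono' measurableSet_Ioi fun l (hl : 0 < l) => ?_
  rw [Measure.restrict_apply (measurableSet_lt measurable_const (hqm.ennreal_toReal.sub_const c))]
  have hc0 : 0 ≤ c := ENNReal.toReal_nonneg
  have hset : {x | ENNReal.ofReal (l + c) < ENNReal.ofReal |g x|} ⊆ {x | l < max (g x - c) 0} := by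
    intro x hx
    have : l + c < g x := by
      simpa [abs_of_nonneg (hg0 x)] using (ENNReal.ofReal_lt_ofReal_iff_of_nonneg (by positivity)).1 hx
    exact (lt_max_of_lt_left (by linarith) : l < max (g x - c) 0)
  refine le_trans ?_ (measure_mono hset)
  refine le_trans (measure_mono ?_) (volume_pos_ofReal_lt_le _)
  rintro s ⟨hs1 : l < _ - c, hs2⟩
  refine ⟨hs2.1, ofReal_lt_of_lt_rearr ?_⟩
  rw [← rearrR, ENNReal.ofReal_lt_iff_lt_toReal (by positivity) (rearrR_ne_top hfin hs2.1)]
  linarith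

/-- The Hardy–Littlewood inequality for the indicator function of a set. -/
theorem setLIntegral_le_lintegral_rearrR (hg : Measurable g) (hg0 : ∀ x, 0 ≤ g x)
    (hfin : ∀ t > 0, dstarR μ g t ≠ ∞) {t : ℝ} {A : Set α}
    (hA : μ A ≤ ENNReal.ofReal t) :
    ∫⁻ x in A, ENNReal.ofReal (g x) ∂μ ≤ ∫⁻ s in Ioc 0 t, rearrR μ g s := by
  have hqm : Measurable (rearrR μ g) := rearrR_antitone.measurable
  have h1 : ∫⁻ s in Ioc 0 t, rearrR μ g s =
      ∫⁻ s in Ioc 0 t, ENNReal.ofReal (rearrR μ g s).toReal :=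
    setLIntegral_congr_fun measurableSet_Ioc fun s hs =>
      (ENNReal.ofReal_toReal (rearrR_ne_top hfin hs.1)).symm
  -- layer cake; taking `≤` in the second formula makes the non-strict bound on `g*` sufficient
  rw [h1, lintegral_eq_lintegral_meas_lt _ (ae_of_all _ hg0) hg.aemeasurable,
    lintegral_eq_lintegral_meas_le _ (ae_of_all _ fun s => ENNReal.toReal_nonneg)
      hqm.ennreal_toReal.aemeasurable]
  refine setLIntegral_mono' measurableSet_Ioi fun l (hl : 0 < l) => ?_
  rw [Measure.restrict_apply (measurableSet_le measurable_const hqm.ennreal_toReal),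
    Measure.restrict_apply (measurableSet_lt measurable_const hg)]
  set m := μ ({a | l < g a} ∩ A) with hm
  have hmt : m ≤ ENNReal.ofReal t := (measure_mono inter_subset_right).trans hA
  have hmfin : m ≠ ∞ := ne_top_of_le_ne_top ENNReal.ofReal_ne_top hmt
  have hmg : m ≤ μ {x | ENNReal.ofReal l < ENNReal.ofReal |g x|} := by
    refine measure_mono fun x hx => ?_
    have : l < g x := hx.1
    rw [mem_ofPred_eq, abs_of_nonneg (hg0 x)]
    exact (ENNReal.ofReal_lt_ofReal_iff_of_nonneg hl.le).2 this
  calc m = volume (Ioo 0 m.toReal) := by simp [hmfin]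
    _ ≤ _ := measure_mono fun s hs => ?_
  have hsm : ENNReal.ofReal s < m := (ENNReal.ofReal_lt_iff_lt_toReal hs.1.le hmfin).2 hs.2
  refine ⟨?_, hs.1, ?_⟩
  · have := le_rearr_of_ofReal_lt (hsm.trans_le hmg)
    exact (ENNReal.ofReal_le_iff_le_toReal (rearrR_ne_top hfin hs.1)).1 this
  · exact ((ENNReal.ofReal_lt_ofReal_iff_of_nonneg hs.1.le).1 (hsm.trans_le hmt)).le

/-- The averages `g**` decrease at rate `(g** - g*) / s`; only the inequality needed below, with the
integral extended to infinity. -/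
theorem dstarR_le_add_lintegral (hfin : ∀ t > 0, dstarR μ g t ≠ ∞) {t T : ℝ} (ht : 0 < t)
    (htT : t ≤ T) :
    dstarR μ g t ≤ dstarR μ g T +
      ∫⁻ s in Ioi t, ENNReal.ofReal (1 / s) * (dstarR μ g s - rearrR μ g s) := by
  set q : ℝ → ℝ := fun s => (rearrR μ g s).toReal with hq
  have hanti : AntitoneOn q (Ioi 0) := fun a ha b _ hab =>
    ENNReal.toReal_mono (rearrR_ne_top hfin ha) (rearrR_antitone hab)
  have hqm : Measurable q := (rearrR_antitone (μ := μ) (g := g)).measurable.ennreal_toReal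
  have hqi : ∀ s > 0, IntegrableOn q (Ioc 0 s) := fun s hs =>
    integrable_toReal_of_lintegral_ne_top rearrR_antitone.measurable.aemeasurable
      (lintegral_rearrR_ne_top hfin hs)
  have hqii : ∀ s > 0, IntervalIntegrable q volume 0 s := fun s hs =>
    (intervalIntegrable_iff_integrableOn_Ioc_of_le (le_of_lt hs)).2 (hqi s hs)
  set H : ℝ → ℝ := fun s => ∫ r in (0 : ℝ)..s, q r with hH
  have hHq : ∀ s > 0, ENNReal.ofReal (H s) = ∫⁻ r in Ioc 0 s, rearrR μ g r := by
    intro s hs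
    change ENNReal.ofReal (∫ r in (0 : ℝ)..s, q r) = _
    rw [intervalIntegral.integral_of_le (le_of_lt hs), integral_toReal
      rearrR_antitone.measurable.aemeasurable, ENNReal.ofReal_toReal (lintegral_rearrR_ne_top hfin hs)]
    refine (ae_restrict_iff' measurableSet_Ioc).2 (ae_of_all _ fun r hr => ?_)
    exact (rearrR_ne_top hfin hr.1).lt_top
  have hP : ∀ s > 0, dstarR μ g s = ENNReal.ofReal (H s / s) := by
    intro s hs
    rw [dstarR, ← hHq s hs, ← ENNReal.ofReal_mul (by positivity)]
    congr 1; ring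
  have hHc : ContinuousOn H (Icc t T) := by
    have := intervalIntegral.continuousOn_primitive_interval' (hqii T (ht.trans_le htT))
      left_mem_uIcc
    rw [uIcc_of_le (ht.le.trans htT)] at this
    exact this.mono (Icc_subset_Icc_left ht.le)
  have hpos : ∀ s ∈ Icc t T, s ≠ 0 := fun s hs => (ht.trans_le hs.1).ne'
  set d : ℝ → ℝ := fun s => (H s / s - q s) / s with hd
  have hdi : IntervalIntegrable d volume t T := by
    have hq' : IntervalIntegrable q volume t T :=
      (hqii T (ht.trans_le htT)).mono_set (by
        rw [uIcc_of_le htT, uIcc_of_le (ht.le.trans htT)]; exact Icc_subset_Icc_left ht.le)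
    have h2 : IntervalIntegrable (fun s => H s / s) volume t T :=
      ContinuousOn.intervalIntegrable_of_Icc htT (hHc.div continuousOn_id hpos)
    have h3 : ContinuousOn (fun s : ℝ => s⁻¹) (uIcc t T) := by
      rw [uIcc_of_le htT]; exact continuousOn_id.inv₀ hpos
    simpa only [hd, div_eq_mul_inv] using (h2.sub hq').mul_continuousOn h3
  -- a monotone function has at most countably many discontinuities, so the fundamental theorem of
  -- calculus applies to `g**` off a countable set
  have hcount := hanti.countable_not_continuousWithinAt
  have hder : ∀ s ∈ Ioo t T \ {x ∈ Ioi 0 | ¬ContinuousWithinAt q (Ioi 0) x},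
      HasDerivAt (fun s => -(H s / s)) (d s) s := by
    rintro s ⟨hs, hsc⟩
    have hs0 : 0 < s := ht.trans hs.1
    have hcs : ContinuousAt q s := by
      by_contra hcon
      exact hsc ⟨hs0, fun h => hcon (h.continuousAt (Ioi_mem_nhds hs0))⟩
    have hHd : HasDerivAt H (q s) s :=
      intervalIntegral.integral_hasDerivAt_right (hqii s hs0)
        hqm.stronglyMeasurable.stronglyMeasurableAtFilter hcs
    have := (hHd.div (hasDerivAt_id s) hs0.ne').neg
    have hval : d s = -((q s * s - H s * 1) / s ^ 2) := by
      change (H s / s - q s) / s = _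
      field_simp
      ring
    rw [hval]
    exact this
  have hftc := integral_eq_of_hasDerivAt_off_countable_of_le (fun s => -(H s / s)) d htT hcount
    (hHc.div continuousOn_id hpos).neg hder hdi
  have hd0 : ∀ s ∈ Ioc t T, 0 ≤ d s := by
    intro s hs
    have hs0 : 0 < s := ht.trans hs.1
    have h := mul_rearrR_le (μ := μ) (g := g) s
    rw [← hHq s hs0, ← ENNReal.ofReal_toReal (rearrR_ne_top hfin hs0),
      ← ENNReal.ofReal_mul hs0.le] at h
    have hH0 : 0 ≤ H s := intervalIntegral.integral_nonneg hs0.le fun _ _ => ENNReal.toReal_nonneg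
    have h' : s * q s ≤ H s := (ENNReal.ofReal_le_ofReal_iff hH0).1 h
    refine div_nonneg (sub_nonneg.2 ?_) hs0.le
    rw [le_div_iff₀ hs0]; linarith
  have hint : ENNReal.ofReal (∫ s in t..T, d s) ≤
      ∫⁻ s in Ioi t, ENNReal.ofReal (1 / s) * (dstarR μ g s - rearrR μ g s) := by
    rw [intervalIntegral.integral_of_le htT, ofReal_integral_eq_lintegral_ofReal
      ((intervalIntegrable_iff_integrableOn_Ioc_of_le htT).1 hdi)
      ((ae_restrict_iff' measurableSet_Ioc).2 (ae_of_all _ hd0))]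
    refine le_trans (le_of_eq ?_) (lintegral_mono_set (Ioc_subset_Ioi_self : Ioc t T ⊆ Ioi t))
    refine setLIntegral_congr_fun measurableSet_Ioc fun s hs => ?_
    have hs0 : 0 < s := ht.trans hs.1
    rw [hP s hs0, ← ENNReal.ofReal_toReal (rearrR_ne_top hfin hs0),
      ← ENNReal.ofReal_sub _ ENNReal.toReal_nonneg, ← ENNReal.ofReal_mul (by positivity)]
    congr 1
    simp only [hd, hq]; ring
  rw [hP t ht, hP T (ht.trans_le htT)]
  calc ENNReal.ofReal (H t / t) = ENNReal.ofReal (H T / T + ∫ s in t..T, d s) := by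
        rw [hftc]; congr 1; ring
    _ ≤ _ := ENNReal.ofReal_add_le.trans (add_le_add_right hint _)

end Rearrangement

/-! ### The first-order estimate -/

/-- The oscillation estimate of first order, `‖F‖** - ‖F‖* ≤ t^{1/n} ‖DF‖**`: the truncated Sobolev
inequality at the level `l = ‖F‖*(t)`, whose superlevel set has measure at most `t`. -/
theorem dstarR_norm_le {n : ℕ} (hn : 1 ≤ n) {V : Type*} [NormedAddCommGroup V]
    [NormedSpace ℝ V] [CompleteSpace V] {F : EuclideanSpace ℝ (Fin n) → V} (hF : ContDiff ℝ 1 F)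
    (h0 : ∀ t > 0, dstarR volume (fun x => ‖F x‖) t ≠ ∞)
    (h1 : ∀ t > 0, dstarR volume (fun x => ‖fderiv ℝ F x‖) t ≠ ∞) {t : ℝ} (ht : 0 < t) :
    dstarR volume (fun x => ‖F x‖) t ≤ rearrR volume (fun x => ‖F x‖) t +
      ENNReal.ofReal (t ^ (1 / (n : ℝ))) * dstarR volume (fun x => ‖fderiv ℝ F x‖) t := by
  set g : EuclideanSpace ℝ (Fin n) → ℝ := fun x => ‖F x‖ with hg
  set h : EuclideanSpace ℝ (Fin n) → ℝ := fun x => ‖fderiv ℝ F x‖ with hh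
  have hgm : Measurable g := hF.continuous.norm.measurable
  have hhm : Measurable h := (hF.continuous_fderiv one_ne_zero).norm.measurable
  set c := (rearrR volume g t).toReal with hc
  have hc0 : 0 ≤ c := ENNReal.toReal_nonneg
  set A := {x | c < ‖F x‖} with hA
  have hvol : volume A ≤ ENNReal.ofReal t := by
    refine le_trans (measure_mono fun x hx => ?_)
      (measure_rearr_lt_le volume (fun x => ENNReal.ofReal |g x|) t)
    have hx' : c < ‖F x‖ := hx
    change rearrR volume g t < ENNReal.ofReal |g x|
    rw [← ENNReal.ofReal_toReal (rearrR_ne_top h0 ht), hg, abs_norm]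
    exact (ENNReal.ofReal_lt_ofReal_iff_of_nonneg hc0).2 hx'
  have hsob := lintegral_norm_sub_le hn hF c (ne_top_of_le_ne_top ENNReal.ofReal_ne_top hvol)
  have hgrad : ∫⁻ x in A, ‖fderiv ℝ F x‖ₑ ≤ ∫⁻ s in Ioc 0 t, rearrR volume h s := by
    refine le_trans (le_of_eq ?_)
      (setLIntegral_le_lintegral_rearrR hhm (fun x => norm_nonneg _) h1 hvol)
    exact lintegral_congr fun x => (ofReal_norm _).symm
  have hvp : volume A ^ (1 / (n : ℝ)) ≤ ENNReal.ofReal (t ^ (1 / (n : ℝ))) := by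
    rw [← ENNReal.ofReal_rpow_of_pos ht]
    exact ENNReal.rpow_le_rpow hvol (by positivity)
  have hone : ENNReal.ofReal (1 / t) * ENNReal.ofReal t = 1 := by
    rw [← ENNReal.ofReal_mul (by positivity), one_div_mul_cancel ht.ne', ENNReal.ofReal_one]
  calc dstarR volume g t
      ≤ ENNReal.ofReal (1 / t) * (ENNReal.ofReal t * rearrR volume g t +
          ENNReal.ofReal (t ^ (1 / (n : ℝ))) * ∫⁻ s in Ioc 0 t, rearrR volume h s) := by
        refine mul_le_mul_right ?_ _
        refine (lintegral_rearrR_le hgm (fun x => norm_nonneg _) h0 ht).trans ?_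
        exact add_le_add_right (hsob.trans (mul_le_mul' hvp hgrad)) _
    _ = _ := by
        rw [mul_add, ← mul_assoc, hone, one_mul, dstarR]
        ring

/-- Integrating the first-order estimate over `(t, ∞)` against `ds / s` bounds the average `‖F‖**`
itself, since it vanishes at infinity. -/
theorem dstarR_norm_le_lintegral {n : ℕ} (hn : 1 ≤ n) {V : Type*} [NormedAddCommGroup V]
    [NormedSpace ℝ V] [CompleteSpace V] {F : EuclideanSpace ℝ (Fin n) → V} (hF : ContDiff ℝ 1 F)
    (h0 : ∀ t > 0, dstarR volume (fun x => ‖F x‖) t ≠ ∞)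
    (h1 : ∀ t > 0, dstarR volume (fun x => ‖fderiv ℝ F x‖) t ≠ ∞)
    (hlim : Tendsto (dstarR volume (fun x => ‖F x‖)) atTop (𝓝 0)) {t : ℝ} (ht : 0 < t) :
    dstarR volume (fun x => ‖F x‖) t ≤
      ∫⁻ s in Ioi t, ENNReal.ofReal (s ^ (1 / (n : ℝ) - 1)) *
        dstarR volume (fun x => ‖fderiv ℝ F x‖) s := by
  set R := ∫⁻ s in Ioi t, ENNReal.ofReal (s ^ (1 / (n : ℝ) - 1)) *
        dstarR volume (fun x => ‖fderiv ℝ F x‖) s with hR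
  have hbound : ∀ T ≥ t, dstarR volume (fun x => ‖F x‖) t ≤
      dstarR volume (fun x => ‖F x‖) T + R := by
    intro T hT
    refine (dstarR_le_add_lintegral h0 ht hT).trans (add_le_add_right ?_ _)
    refine setLIntegral_mono' measurableSet_Ioi fun s hs => ?_
    have hs0 : 0 < s := ht.trans hs
    calc ENNReal.ofReal (1 / s) * (dstarR volume (fun x => ‖F x‖) s
            - rearrR volume (fun x => ‖F x‖) s)
        ≤ ENNReal.ofReal (1 / s) * (ENNReal.ofReal (s ^ (1 / (n : ℝ))) *
            dstarR volume (fun x => ‖fderiv ℝ F x‖) s) :=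
          mul_le_mul_right (tsub_le_iff_left.2 (dstarR_norm_le hn hF h0 h1 hs0)) _
      _ = _ := by
          rw [← mul_assoc, ← ENNReal.ofReal_mul (by positivity), Real.rpow_sub_one hs0.ne']
          congr 2; ring
  have hl : Tendsto (fun T => dstarR volume (fun x => ‖F x‖) T + R) atTop (𝓝 (0 + R)) :=
    hlim.add tendsto_const_nhds
  rw [zero_add] at hl
  exact ge_of_tendsto hl ((eventually_ge_atTop t).mono hbound)

/-! ### Iteration -/

/-- Tonelli's theorem on the wedge `t < s < r`. -/
theorem lintegral_Ioi_Ioi_swap {a b : ℝ → ℝ≥0∞} (ha : Measurable a) (hb : Measurable b) (t : ℝ) :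
    ∫⁻ s in Ioi t, a s * ∫⁻ r in Ioi s, b r = ∫⁻ r in Ioi t, b r * ∫⁻ s in Ioo t r, a s := by
  have hm : MeasurableSet {p : ℝ × ℝ | t < p.1 ∧ p.1 < p.2} :=
    (measurableSet_lt measurable_const measurable_fst).inter
      (measurableSet_lt measurable_fst measurable_snd)
  set K : ℝ → ℝ → ℝ≥0∞ := fun s r =>
    {p : ℝ × ℝ | t < p.1 ∧ p.1 < p.2}.indicator (fun p => a p.1 * b p.2) (s, r) with hK
  have hKm : Measurable (Function.uncurry K) :=
    ((ha.comp measurable_fst).mul (hb.comp measurable_snd)).indicator hm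
  calc ∫⁻ s in Ioi t, a s * ∫⁻ r in Ioi s, b r = ∫⁻ s, ∫⁻ r, K s r := by
        rw [← lintegral_indicator measurableSet_Ioi]
        refine lintegral_congr fun s => ?_
        by_cases hs : t < s
        · rw [indicator_of_mem (show s ∈ Ioi t from hs), ← lintegral_const_mul _ hb,
            ← lintegral_indicator measurableSet_Ioi]
          refine lintegral_congr fun r => ?_
          simp [hK, indicator, hs]
        · simp [hK, indicator, hs]
    _ = ∫⁻ r, ∫⁻ s, K s r := lintegral_lintegral_swap hKm.aemeasurable
    _ = _ := by
        rw [← lintegral_indicator measurableSet_Ioi]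
        refine lintegral_congr fun r => ?_
        by_cases hr : t < r
        · rw [indicator_of_mem (show r ∈ Ioi t from hr), ← lintegral_const_mul _ ha,
            ← lintegral_indicator measurableSet_Ioo]
          refine lintegral_congr fun s => ?_
          simp [hK, indicator, mul_comm]
        · have : ∀ s, ¬ (t < s ∧ s < r) := fun s hs => hr (hs.1.trans hs.2)
          simp [hK, indicator, hr, this]

theorem lintegral_Ioo_rpow_le {t r p : ℝ} (ht : 0 < t) (hr : t < r) (hp : 0 < p) :
    ∫⁻ s in Ioo t r, ENNReal.ofReal (s ^ (p - 1)) ≤ ENNReal.ofReal (r ^ p / p) := by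
  have hnot : (0 : ℝ) ∉ uIcc t r := by
    rw [uIcc_of_le hr.le]; exact fun h => absurd h.1 (not_le.2 ht)
  have hi : IntervalIntegrable (fun s : ℝ => s ^ (p - 1)) volume t r :=
    intervalIntegral.intervalIntegrable_rpow (Or.inr hnot)
  rw [restrict_Ioo_eq_restrict_Ioc, ← ofReal_integral_eq_lintegral_ofReal
    ((intervalIntegrable_iff_integrableOn_Ioc_of_le hr.le).1 hi)
    ((ae_restrict_iff' measurableSet_Ioc).2 (ae_of_all _ fun s hs =>
      Real.rpow_nonneg (ht.trans hs.1).le _)),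
    ← intervalIntegral.integral_of_le hr.le, integral_rpow (Or.inl (by linarith)), sub_add_cancel]
  apply ENNReal.ofReal_le_ofReal
  gcongr
  linarith [Real.rpow_nonneg ht.le p]

/-- Iteration of the averaging inequality `J j ≤ ∫_t^∞ s^{1/n - 1} J (j + 1)`. After exchanging the
integrals, each step integrates the power `s^{(m + 1)/n - 1}` up to `r` and contributes the factor
`n / (m + 1)`, whence the constant `n^m / m!`. -/
theorem iterate_averaging {n : ℕ} (hn : 1 ≤ n) {J : ℕ → ℝ → ℝ≥0∞} (hJ : ∀ j, Measurable (J j))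
    {k : ℕ} (hstep : ∀ j < k, ∀ t > 0, J j t ≤
      ∫⁻ s in Ioi t, ENNReal.ofReal (s ^ (1 / (n : ℝ) - 1)) * J (j + 1) s) (m : ℕ) (hm : m + 2 ≤ k)
    {t : ℝ} (ht : 0 < t) :
    J 1 t ≤ ENNReal.ofReal ((n : ℝ) ^ m / m.factorial) *
      ∫⁻ s in Ioi t, ENNReal.ofReal (s ^ (((m : ℝ) + 1) / n - 1)) * J (m + 2) s := by
  have hn0 : (0 : ℝ) < n := by exact_mod_cast hn
  induction m with
  | zero => simpa using hstep 1 (by lia) t ht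
  | succ m ih =>
    have hmeas : ∀ (e : ℝ) (j : ℕ), Measurable fun s : ℝ => ENNReal.ofReal (s ^ e) * J j s :=
      fun e j => Measurable.mul (by fun_prop) (hJ j)
    set p : ℝ := ((m : ℝ) + 1) / n with hp
    have hp0 : 0 < p := by positivity
    calc J 1 t ≤ ENNReal.ofReal ((n : ℝ) ^ m / m.factorial) *
          ∫⁻ s in Ioi t, ENNReal.ofReal (s ^ (p - 1)) * J (m + 2) s := ih (by lia)
      _ ≤ ENNReal.ofReal ((n : ℝ) ^ m / m.factorial) *
          ∫⁻ s in Ioi t, ENNReal.ofReal (s ^ (p - 1)) *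
            ∫⁻ r in Ioi s, ENNReal.ofReal (r ^ (1 / (n : ℝ) - 1)) * J (m + 3) r := by
          refine mul_le_mul_right (setLIntegral_mono' measurableSet_Ioi fun s hs => ?_) _
          exact mul_le_mul_right (hstep (m + 2) (by lia) s (ht.trans hs)) _
      _ = ENNReal.ofReal ((n : ℝ) ^ m / m.factorial) *
          ∫⁻ r in Ioi t, ENNReal.ofReal (r ^ (1 / (n : ℝ) - 1)) * J (m + 3) r *
            ∫⁻ s in Ioo t r, ENNReal.ofReal (s ^ (p - 1)) := by
          rw [lintegral_Ioi_Ioi_swap (by fun_prop) (hmeas _ _)]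
      _ ≤ ENNReal.ofReal ((n : ℝ) ^ m / m.factorial) *
          ∫⁻ r in Ioi t, ENNReal.ofReal (1 / p) *
            (ENNReal.ofReal (r ^ (((m + 1 : ℕ) + 1 : ℝ) / n - 1)) * J (m + 3) r) := by
          refine mul_le_mul_right (setLIntegral_mono' measurableSet_Ioi fun r hr => ?_) _
          have hr0 : 0 < r := ht.trans hr
          refine (mul_le_mul_right (lintegral_Ioo_rpow_le ht hr hp0) _).trans_eq ?_
          have he : r ^ (((m + 1 : ℕ) + 1 : ℝ) / n - 1) = r ^ (1 / (n : ℝ) - 1) * r ^ p := by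
            rw [← Real.rpow_add hr0]
            congr 1
            rw [hp]; push_cast; ring
          rw [he, div_eq_mul_one_div (r ^ p), ENNReal.ofReal_mul (by positivity),
            ENNReal.ofReal_mul (by positivity)]
          ring
      _ = _ := by
          rw [lintegral_const_mul _ (hmeas _ _), ← mul_assoc, ← ENNReal.ofReal_mul (by positivity)]
          congr 2
          rw [hp, Nat.factorial_succ]
          push_cast
          field_simp
          ring

/-- The iterated oscillation estimate:
`f**(t) − f*(t) ≤ (n^{3k/2−2}/(k−2)!) t^{1/n} ∫_t^∞ s^{(k−1)/n−1} |∇^k f|**(s) ds`. -/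
theorem osc_iterated_gradient_estimate
    (n : ℕ) (hn : 1 ≤ n) (k : ℕ) (hk : 2 ≤ k)
    (f : EuclideanSpace ℝ (Fin n) → ℝ) (hf : ContDiff ℝ (k : ℕ∞) f)
    (hfin : ∀ j ≤ k, ∀ t > 0,
      dstarR volume (fun x => ‖iteratedFDeriv ℝ j f x‖) t ≠ ∞)
    (hlim : ∀ j < k,
      Tendsto (dstarR volume (fun x => ‖iteratedFDeriv ℝ j f x‖)) atTop (𝓝 0))
    (t : ℝ) (ht : 0 < t) :
    dstarR volume f t - rearrR volume f t
      ≤ ENNReal.ofReal ((n : ℝ) ^ ((3 / 2 : ℝ) * k - 2) / (k - 2).factorial) *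
          (ENNReal.ofReal (t ^ (1 / (n : ℝ))) *
            ∫⁻ s in Ioi t, ENNReal.ofReal s ^ (((k : ℝ) - 1) / n - 1) *
              dstarR volume (fun x => ‖iteratedFDeriv ℝ k f x‖) s) := by
  set J : ℕ → ℝ → ℝ≥0∞ := fun j => dstarR volume (fun x => ‖iteratedFDeriv ℝ j f x‖) with hJ
  have hC : ∀ j < k, ContDiff ℝ 1 (iteratedFDeriv ℝ j f) := fun j hj =>
    hf.iteratedFDeriv_right (by norm_cast; lia)
  have hgrad : ∀ j, (fun x => ‖fderiv ℝ (iteratedFDeriv ℝ j f) x‖) =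
      fun x => ‖iteratedFDeriv ℝ (j + 1) f x‖ := fun j =>
    funext fun x => norm_fderiv_iteratedFDeriv
  have hstep : ∀ j < k, ∀ t > 0, J j t ≤
      ∫⁻ s in Ioi t, ENNReal.ofReal (s ^ (1 / (n : ℝ) - 1)) * J (j + 1) s := by
    intro j hj t ht
    have := dstarR_norm_le_lintegral hn (hC j hj) (hfin j hj.le)
      (by rw [hgrad]; exact hfin (j + 1) hj) (hlim j hj) ht
    rwa [hgrad] at this
  obtain ⟨m, rfl⟩ : ∃ m, k = m + 2 := ⟨k - 2, by lia⟩
  have hiter := iterate_averaging hn (fun j => measurable_dstarR) hstep m le_rfl ht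
  have hfirst : dstarR volume f t ≤ rearrR volume f t +
      ENNReal.ofReal (t ^ (1 / (n : ℝ))) * J 1 t := by
    have h := dstarR_norm_le hn (hC 0 (by lia)) (hfin 0 (by lia))
      (by rw [hgrad]; exact hfin 1 (by lia)) ht
    -- the zeroth iterated derivative has norm `|f|`, which has the same rearrangement as `f`
    have hr : rearrR volume (fun x => ‖iteratedFDeriv ℝ 0 f x‖) = rearrR volume f := by
      unfold rearrR
      simp
    rw [hgrad] at h
    simpa only [hJ, dstarR, hr, zero_add] using h
  rw [tsub_le_iff_left]
  refine hfirst.trans (add_le_add_right ?_ _)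
  have hn1 : (1 : ℝ) ≤ n := by exact_mod_cast hn
  have hconst : (n : ℝ) ^ m / m.factorial ≤
      (n : ℝ) ^ ((3 / 2 : ℝ) * (m + 2 : ℕ) - 2) / m.factorial := by
    rw [← Real.rpow_natCast]
    gcongr
    push_cast; linarith [(Nat.cast_nonneg m : (0 : ℝ) ≤ m)]
  calc ENNReal.ofReal (t ^ (1 / (n : ℝ))) * J 1 t
      ≤ ENNReal.ofReal (t ^ (1 / (n : ℝ))) * (ENNReal.ofReal ((n : ℝ) ^ m / m.factorial) *
        ∫⁻ s in Ioi t, ENNReal.ofReal (s ^ (((m : ℝ) + 1) / n - 1)) * J (m + 2) s) :=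
        mul_le_mul_right hiter _
    _ = ENNReal.ofReal ((n : ℝ) ^ m / m.factorial) * (ENNReal.ofReal (t ^ (1 / (n : ℝ))) *
        ∫⁻ s in Ioi t, ENNReal.ofReal s ^ ((((m + 2 : ℕ) : ℝ) - 1) / n - 1) * J (m + 2) s) := by
        rw [mul_left_comm]
        congr 2
        refine setLIntegral_congr_fun measurableSet_Ioi fun s hs => ?_
        have hs0 : 0 < s := ht.trans hs
        have he : (((m + 2 : ℕ) : ℝ) - 1) = m + 1 := by push_cast; ring
        rw [ENNReal.ofReal_rpow_of_pos hs0, he]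
    _ ≤ _ := by
        rw [Nat.add_sub_cancel]
        exact mul_le_mul_left (ENNReal.ofReal_le_ofReal hconst) _

end
end

section
/- Let n ∈ ℕ, n ≥ 2, let p ∈ (1,n), and let k ∈ ℕ satisfy 2 ≤ k < n/p + 1. Then there exists a constant C = C(n,k,p) > 0 such that for every k-times continuously differentiable function f : ℝ^n → ℝ satisfying |∇^j f|**(t) < ∞ for all t > 0 and all j ∈ {0,…,k}, and lim_{t→∞} |∇^j f|**(t) = 0 for each j ∈ {0,…,k−1}: (∫_0^∞ (f**(t) − f*(t))^p t^{−kp/n} dt)^{1/p} ≤ C·(∫_0^∞ (|∇^k f|**(t))^p dt)^{1/p}. -/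
/-!
The theorem rests on the first-order estimate `u** - u* ≤ C t^{1/n} |∇u|**` for vector-valued `C¹`
maps (`osc_le_dst_fderiv`). With `l = u*(t)`, the set `A = {‖u‖ > l}` has measure at most `t` and
`t (u** - u*)(t) ≤ ∫ (‖u‖ - l)₊`. In a ball of measure `2 t` at least half of the displacements lead
out of `A`; integrating the gradient along those chords up to their first exit from `A`
(`chord_le`) and then averaging with Tonelli's theorem and translation invariance gives
`∫ (‖u‖ - l)₊ ≤ C t^{1/n} ∫_A |∇u|` (`poincare_aux`), and `∫_A |∇u| ≤ ∫_0^t |∇u|*`. Neither an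
isoperimetric inequality nor differentiability of `‖u‖` is needed.

To climb to order `k`, monotonicity of the rearrangement gives
`g**(t) ≤ g**(2t) + (g** - g*)(2t)`; since `g**` vanishes at infinity,
`g**(t) ≤ ∑_{i ≥ 1} (g** - g*)(2^i t)` (`dst_le_tsum`). Minkowski's inequality and scaling turn this
into a Hardy inequality (`hardy_discrete`): the norm of `t^{-a} |∇^j f|**` in `L^p(0,∞)` is at most a
constant times that of `t^{1/n - a} |∇^{j+1} f|**`, provided `a < 1/p`. In `wN_iterate` the exponents
are `a = m/n` with `m ≤ k - 1`, and `(k-1)/n < 1/p` is exactly the hypothesis `k < n/p + 1`. One last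
use of the first-order estimate passes from `|∇f|**` to `f** - f*`.
-/

open MeasureTheory Set Filter Topology
open scoped ENNReal

noncomputable section

/-! ### Rearrangements -/

/-- The Galois-type relation between the rearrangement and the distribution function. It encodes
that the infimum defining `rearr` is attained; `f` need not be measurable. -/
theorem lt_rearr_iff {α : Type*} [MeasurableSpace α] {μ : Measure α} {f : α → ℝ≥0∞} {t : ℝ}
    {l : ℝ≥0∞} : l < rearr μ f t ↔ ENNReal.ofReal t < μ {x | l < f x} := by
  constructor
  · intro h
    by_contra! hc
    exact absurd h (not_lt.2 (sInf_le hc))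
  · intro h
    by_contra! hc
    rcases eq_or_ne l ∞ with rfl | hl
    · simp at h
    obtain ⟨u, hu, hul, hut⟩ := exists_seq_strictAnti_tendsto' (show l < ∞ from hl.lt_top)
    have hU : {x | l < f x} = ⋃ n, {x | u n < f x} := by
      ext x
      simp only [mem_ofPred_eq, mem_iUnion]
      constructor
      · intro hx
        exact ((hut.eventually (gt_mem_nhds hx)).exists)
      · rintro ⟨n, hn⟩
        exact (hul n).1.trans hn
    have hmono : Monotone fun n => {x | u n < f x} := by
      intro a b hab x hx
      exact lt_of_le_of_lt (hu.antitone hab) hx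
    rw [hU, hmono.measure_iUnion] at h
    obtain ⟨n, hn⟩ := lt_iSup_iff.1 h
    obtain ⟨m, hm, hmn⟩ := sInf_lt_iff.1 (lt_of_le_of_lt hc (hul n).1)
    refine absurd hn (not_lt.2 (le_trans (measure_mono ?_) hm))
    intro x hx
    exact hmn.trans hx

/-- An extended nonnegative number is the length of the interval of reals in `(0,∞)` below it. -/
theorem volume_ofReal_lt (a : ℝ≥0∞) :
    volume.restrict (Ioi (0 : ℝ)) {r | ENNReal.ofReal r < a} = a := by
  have hm : MeasurableSet {r : ℝ | ENNReal.ofReal r < a} :=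
    measurableSet_lt ENNReal.measurable_ofReal measurable_const
  rw [Measure.restrict_apply hm]
  rcases eq_or_ne a ∞ with rfl | ha
  · simp
  · lift a to NNReal using ha
    have : {r : ℝ | ENNReal.ofReal r < a} ∩ Ioi 0 = Ioo (0 : ℝ) a := by
      ext r
      simp only [mem_inter_iff, mem_ofPred_eq, mem_Ioi, mem_Ioo]
      constructor
      · rintro ⟨h1, h2⟩
        refine ⟨h2, ?_⟩
        rw [← ENNReal.ofReal_coe_nnreal] at h1
        exact (ENNReal.ofReal_lt_ofReal_iff_of_nonneg h2.le).1 h1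
      · rintro ⟨h1, h2⟩
        refine ⟨?_, h1⟩
        rw [← ENNReal.ofReal_coe_nnreal]
        exact (ENNReal.ofReal_lt_ofReal_iff_of_nonneg h1.le).2 h2
    rw [this, Real.volume_Ioo]
    simp

/-- Layer-cake formula for functions that may take the value `∞`. -/
theorem layercake {α : Type*} [MeasurableSpace α] (μ : Measure α) [SFinite μ] {f : α → ℝ≥0∞}
    (hf : Measurable f) :
    ∫⁻ x, f x ∂μ = ∫⁻ r in Ioi (0 : ℝ), μ {x | ENNReal.ofReal r < f x} := by
  have hm : MeasurableSet {q : α × ℝ | ENNReal.ofReal q.2 < f q.1} :=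
    measurableSet_lt (ENNReal.measurable_ofReal.comp measurable_snd) (hf.comp measurable_fst)
  calc ∫⁻ x, f x ∂μ = ∫⁻ x, (∫⁻ r in Ioi (0 : ℝ),
        {q : α × ℝ | ENNReal.ofReal q.2 < f q.1}.indicator 1 (x, r)) ∂μ := by
        refine lintegral_congr fun x => ?_
        have h2 : MeasurableSet {r : ℝ | ENNReal.ofReal r < f x} :=
          measurableSet_lt ENNReal.measurable_ofReal measurable_const
        conv_lhs => rw [← volume_ofReal_lt (f x), ← lintegral_indicator_one h2]
        rfl
    _ = _ := by
        rw [lintegral_lintegral_swap]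
        · refine lintegral_congr fun r => ?_
          have h2 : MeasurableSet {x : α | ENNReal.ofReal r < f x} :=
            measurableSet_lt measurable_const hf
          rw [← lintegral_indicator_one h2]
          rfl
        · exact (measurable_one.indicator hm).aemeasurable

/-- Hardy–Littlewood: among sets of measure at most `t`, no integral of `g` exceeds `∫_0^t g*`. -/
theorem setLIntegral_le_rearr {α : Type*} [MeasurableSpace α] (μ : Measure α) [SFinite μ]
    {g : α → ℝ≥0∞} (hg : Measurable g) {E : Set α} {t : ℝ} (hE : μ E ≤ ENNReal.ofReal t) :
    ∫⁻ x in E, g x ∂μ ≤ ∫⁻ s in Ioc (0 : ℝ) t, rearr μ g s := by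
  rw [layercake _ hg, layercake _ (rearr_antitone μ g).measurable]
  refine lintegral_mono fun r => ?_
  set m := μ {x | ENNReal.ofReal r < g x} with hm
  have hg' : MeasurableSet {x | ENNReal.ofReal r < g x} := measurableSet_lt measurable_const hg
  have h1 : μ.restrict E {x | ENNReal.ofReal r < g x} ≤ min (ENNReal.ofReal t) m := by
    rw [Measure.restrict_apply hg']
    exact le_min ((measure_mono inter_subset_right).trans hE) (measure_mono inter_subset_left)
  refine h1.trans ?_
  have hs : MeasurableSet {s : ℝ | ENNReal.ofReal r < rearr μ g s} :=
    measurableSet_lt measurable_const (rearr_antitone μ g).measurable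
  rw [← volume_ofReal_lt (min (ENNReal.ofReal t) m), Measure.restrict_apply hs,
    Measure.restrict_apply (measurableSet_lt ENNReal.measurable_ofReal measurable_const)]
  refine measure_mono ?_
  rintro s ⟨h1, h2⟩
  simp only [mem_ofPred_eq, lt_min_iff] at h1
  exact ⟨lt_rearr_iff.2 h1.2, h2, ((ENNReal.ofReal_lt_ofReal_iff_of_nonneg (le_of_lt h2)).1 h1.1).le⟩

theorem lintegral_rearr_sub_le {α : Type*} [MeasurableSpace α] (μ : Measure α) [SFinite μ]
    {g : α → ℝ≥0∞} (hg : Measurable g) (t : ℝ) (l : ℝ≥0∞) :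
    ∫⁻ s in Ioc (0 : ℝ) t, (rearr μ g s - l) ≤ ∫⁻ x, (g x - l) ∂μ := by
  rw [layercake _ (hg.sub_const l), layercake _ ((rearr_antitone μ g).measurable.sub_const l)]
  refine lintegral_mono fun r => ?_
  rw [← volume_ofReal_lt (μ _), Measure.restrict_apply (measurableSet_lt measurable_const
      ((rearr_antitone μ g).measurable.sub_const l)),
    Measure.restrict_apply (measurableSet_lt ENNReal.measurable_ofReal measurable_const)]
  refine measure_mono ?_
  rintro s ⟨h1, h2⟩
  simp only [mem_ofPred_eq, lt_tsub_iff_right] at h1 ⊢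
  exact ⟨lt_rearr_iff.1 h1, h2.1⟩

/-- The maximal rearrangement `g**(t) = (1/t) ∫_0^t g*(s) ds` of an `ℝ≥0∞`-valued function. -/
def dst {α : Type*} [MeasurableSpace α] (μ : Measure α) (g : α → ℝ≥0∞) (t : ℝ) : ℝ≥0∞ :=
  ENNReal.ofReal (1 / t) * ∫⁻ s in Ioc (0 : ℝ) t, rearr μ g s

/-- The oscillation is controlled by the truncation of `g` at height `g*(t)`. -/
theorem osc_le {α : Type*} [MeasurableSpace α] (μ : Measure α) [SFinite μ]
    {g : α → ℝ≥0∞} (hg : Measurable g) {t : ℝ} (ht : 0 < t) :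
    dst μ g t - rearr μ g t ≤ ENNReal.ofReal (1 / t) * ∫⁻ x, (g x - rearr μ g t) ∂μ := by
  set l := rearr μ g t
  rw [tsub_le_iff_right]
  have h1 : ∫⁻ s in Ioc (0 : ℝ) t, rearr μ g s
      ≤ (∫⁻ x, (g x - l) ∂μ) + ENNReal.ofReal t * l := by
    calc _ ≤ ∫⁻ s in Ioc (0 : ℝ) t, ((rearr μ g s - l) + l) :=
          lintegral_mono fun s => le_tsub_add
      _ = (∫⁻ s in Ioc (0 : ℝ) t, (rearr μ g s - l)) + ENNReal.ofReal t * l := by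
          rw [lintegral_add_right _ measurable_const]
          simp [mul_comm]
      _ ≤ _ := by gcongr; exact lintegral_rearr_sub_le μ hg t l
  calc dst μ g t ≤ ENNReal.ofReal (1 / t) * ((∫⁻ x, (g x - l) ∂μ) + ENNReal.ofReal t * l) := by
        unfold dst; gcongr
    _ = _ := by
        rw [mul_add, ← mul_assoc, ← ENNReal.ofReal_mul (by positivity), one_div,
          inv_mul_cancel₀ ht.ne']
        simp

/-- The discrete substitute for `-(g**)'(t) = (g** - g*)(t) / t`: one doubling of `t` costs one
oscillation. -/
theorem dst_le_double {α : Type*} [MeasurableSpace α] (μ : Measure α)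
    (g : α → ℝ≥0∞) {t : ℝ} (ht : 0 < t) (hfin : rearr μ g (2 * t) ≠ ∞) :
    dst μ g t ≤ dst μ g (2 * t) + (dst μ g (2 * t) - rearr μ g (2 * t)) := by
  set l := rearr μ g (2 * t) with hl
  have h2 : ∫⁻ s in Ioc (0 : ℝ) (2 * t), rearr μ g s
      = (∫⁻ s in Ioc (0 : ℝ) t, rearr μ g s) + ∫⁻ s in Ioc t (2 * t), rearr μ g s := by
    rw [← lintegral_union measurableSet_Ioc, Ioc_union_Ioc_eq_Ioc ht.le (by linarith)]
    exact Ioc_disjoint_Ioc_of_le le_rfl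
  have h3 : ENNReal.ofReal t * l ≤ ∫⁻ s in Ioc t (2 * t), rearr μ g s := by
    calc _ = ∫⁻ s in Ioc t (2 * t), l := by
            simp only [lintegral_const, MeasurableSet.univ, Measure.restrict_apply, univ_inter,
              Real.volume_Ioc]
            rw [mul_comm]; congr 2; ring
      _ ≤ _ := setLIntegral_mono' measurableSet_Ioc fun s hs => rearr_antitone μ g hs.2
  have h4 : dst μ g t + l ≤ dst μ g (2 * t) + dst μ g (2 * t) := by
    have : dst μ g (2 * t) + dst μ g (2 * t)
        = ENNReal.ofReal (1 / t) * ∫⁻ s in Ioc (0 : ℝ) (2 * t), rearr μ g s := by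
      unfold dst
      rw [← add_mul, ← ENNReal.ofReal_add (by positivity) (by positivity)]
      congr 2
      field_simp
      norm_num
    rw [this, h2, mul_add]
    unfold dst
    gcongr
    calc l = ENNReal.ofReal (1 / t) * (ENNReal.ofReal t * l) := by
          rw [← mul_assoc, ← ENNReal.ofReal_mul (by positivity), one_div, inv_mul_cancel₀ ht.ne']
          simp
      _ ≤ _ := by gcongr
  calc dst μ g t ≤ dst μ g (2 * t) + dst μ g (2 * t) - l := ENNReal.le_sub_of_add_le_right hfin h4
    _ ≤ _ := add_tsub_le_assoc

/-- If `g**` vanishes at infinity, it is recovered from the oscillations at dyadic multiples. -/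
theorem dst_le_tsum {α : Type*} [MeasurableSpace α] (μ : Measure α)
    (g : α → ℝ≥0∞) (hfin : ∀ t > 0, dst μ g t ≠ ∞) (hlim : Tendsto (dst μ g) atTop (𝓝 0))
    {t : ℝ} (ht : 0 < t) :
    dst μ g t ≤ ∑' i : ℕ, (dst μ g (2 ^ (i + 1) * t) - rearr μ g (2 ^ (i + 1) * t)) := by
  have hr : ∀ s > 0, rearr μ g s ≠ ∞ := by
    intro s hs hinf
    apply hfin s hs
    have : ∫⁻ u in Ioc (0 : ℝ) s, rearr μ g u = ∞ := by
      rw [eq_top_iff]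
      calc ∞ = ∫⁻ u in Ioc (0 : ℝ) s, ∞ := by
              simp [ENNReal.top_mul, hs]
        _ ≤ _ := setLIntegral_mono' measurableSet_Ioc fun u hu => by
              rw [← hinf]; exact rearr_antitone μ g hu.2
    rw [dst, this, ENNReal.mul_top]
    simp [hs]
  have hN : ∀ N : ℕ, dst μ g t ≤ dst μ g (2 ^ N * t) +
      ∑ i ∈ Finset.range N, (dst μ g (2 ^ (i + 1) * t) - rearr μ g (2 ^ (i + 1) * t)) := by
    intro N
    induction N with
    | zero => simp
    | succ N ih =>
      refine ih.trans ?_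
      have h := dst_le_double μ g (t := 2 ^ N * t) (by positivity) (hr _ (by positivity))
      rw [show 2 * (2 ^ N * t) = 2 ^ (N + 1) * t by ring] at h
      rw [Finset.sum_range_succ]
      refine (add_le_add_left h _).trans (le_of_eq ?_)
      ring
  have hlim2 : Tendsto (fun N : ℕ => dst μ g (2 ^ N * t)) atTop (𝓝 0) :=
    hlim.comp ((tendsto_pow_atTop_atTop_of_one_lt one_lt_two).atTop_mul_const ht)
  have hsum := ENNReal.tendsto_nat_tsum
    (fun i : ℕ => dst μ g (2 ^ (i + 1) * t) - rearr μ g (2 ^ (i + 1) * t))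
  have := hlim2.add hsum
  rw [zero_add] at this
  exact ge_of_tendsto' this hN

/-! ### The first-order estimate -/

/-- Along a chord starting where `‖u‖ > l` and ending where `‖u‖ ≤ l`, the excess `‖u‖ - l` is paid
for before the first exit from the superlevel set, so only the gradient inside that set counts. -/
theorem chord_le {E F : Type*} [NormedAddCommGroup E] [NormedSpace ℝ E]
    [NormedAddCommGroup F] [NormedSpace ℝ F] [CompleteSpace F]
    {u : E → F} (hu : ContDiff ℝ 1 u) (l : ℝ≥0∞) (x z : E) (hy : ‖u (x + z)‖ₑ ≤ l) :
    ‖u x‖ₑ - l ≤ ‖z‖ₑ * ∫⁻ s in Ioc (0 : ℝ) 1,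
      {w | l < ‖u w‖ₑ}.indicator (fun w => ‖fderiv ℝ u w‖ₑ) (x + s • z) := by
  have hline : Continuous fun s : ℝ => x + s • z := by fun_prop
  have hcu : Continuous fun s : ℝ => ‖u (x + s • z)‖ₑ := (hu.continuous.comp hline).enorm
  -- the parameters where the chord is outside the superlevel set; `s₀` is the first exit
  set S : Set ℝ := Icc 0 1 ∩ {s | ‖u (x + s • z)‖ₑ ≤ l} with hS
  have hSc : IsCompact S := isCompact_Icc.inter_right (isClosed_le hcu continuous_const)
  have hSne : S.Nonempty := ⟨1, by simp, by simpa using hy⟩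
  obtain ⟨s₀, hs₀, hmin⟩ := hSc.exists_isLeast hSne
  have hs0 : 0 ≤ s₀ := hs₀.1.1
  have hs1 : s₀ ≤ 1 := hs₀.1.2
  have hder : ∀ s : ℝ, HasDerivAt (fun s : ℝ => u (x + s • z)) (fderiv ℝ u (x + s • z) z) s := by
    intro s
    have h1 : HasDerivAt (fun s : ℝ => x + s • z) z s := by
      simpa using ((hasDerivAt_id s).smul_const z).const_add x
    exact ((hu.differentiable one_ne_zero (x + s • z)).hasFDerivAt).comp_hasDerivAt s h1
  have hcd : Continuous fun s : ℝ => fderiv ℝ u (x + s • z) z :=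
    ((hu.continuous_fderiv one_ne_zero).comp hline).clm_apply continuous_const
  have hftc := intervalIntegral.integral_eq_sub_of_hasDerivAt
    (a := 0) (b := s₀) (fun s _ => hder s) (hcd.intervalIntegrable 0 s₀)
  rw [intervalIntegral.integral_of_le hs0] at hftc
  have h1 : ‖u x‖ₑ - l ≤ ‖u (x + s₀ • z) - u x‖ₑ := by
    rw [tsub_le_iff_right]
    calc ‖u x‖ₑ = ‖u (x + s₀ • z) - (u (x + s₀ • z) - u x)‖ₑ := by simp
      _ ≤ ‖u (x + s₀ • z)‖ₑ + ‖u (x + s₀ • z) - u x‖ₑ := enorm_sub_le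
      _ ≤ _ := by rw [add_comm]; gcongr; exact hs₀.2
  refine h1.trans ?_
  have h2 : u (x + s₀ • z) - u x = ∫ s in Ioc 0 s₀, fderiv ℝ u (x + s • z) z := by
    rw [hftc]; simp
  rw [h2, ← lintegral_const_mul' _ _ enorm_ne_top]
  calc _ ≤ ∫⁻ s in Ioc 0 s₀, ‖fderiv ℝ u (x + s • z) z‖ₑ := enorm_integral_le_lintegral_enorm _
    _ = ∫⁻ s in Ioo 0 s₀, ‖fderiv ℝ u (x + s • z) z‖ₑ := by
        rw [Measure.restrict_congr_set Ioo_ae_eq_Ioc]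
    _ ≤ ∫⁻ s in Ioo 0 s₀, ‖z‖ₑ *
          {w | l < ‖u w‖ₑ}.indicator (fun w => ‖fderiv ℝ u w‖ₑ) (x + s • z) := by
        refine setLIntegral_mono' measurableSet_Ioo fun s hs => ?_
        rw [indicator_of_mem, mul_comm]
        · exact ContinuousLinearMap.le_opENorm _ _
        · by_contra hc
          have hc' : ‖u (x + s • z)‖ₑ ≤ l := not_lt.1 hc
          exact absurd (hmin ⟨⟨hs.1.le, hs.2.le.trans hs1⟩, hc'⟩) (not_le.2 hs.2)
    _ ≤ _ := lintegral_mono_set (Ioo_subset_Ioc_self.trans (Ioc_subset_Ioc_right hs1))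

/-- A Poincaré inequality for the truncation of `‖u‖` at height `l`. When the superlevel set fills at
most half of a ball of radius `h`, at least half of the chords of length below `h` from any point end
outside it; `chord_le` is averaged over these. -/
theorem poincare_aux {E F : Type*} [NormedAddCommGroup E] [NormedSpace ℝ E]
    [FiniteDimensional ℝ E] [MeasurableSpace E] [BorelSpace E]
    (μ : Measure E) [μ.IsAddHaarMeasure]
    [NormedAddCommGroup F] [NormedSpace ℝ F] [CompleteSpace F]
    {u : E → F} (hu : ContDiff ℝ 1 u) (l : ℝ≥0∞) {h : ℝ}
    {T : ℝ≥0∞} (hT : T ≠ ∞) (hT0 : T ≠ 0) (hball : μ (Metric.ball 0 h) = 2 * T)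
    (hE : μ {w | l < ‖u w‖ₑ} ≤ T) :
    ∫⁻ x, (‖u x‖ₑ - l) ∂μ ≤
      2 * ENNReal.ofReal h * ∫⁻ x in {w | l < ‖u w‖ₑ}, ‖fderiv ℝ u x‖ₑ ∂μ := by
  set A : Set E := {w | l < ‖u w‖ₑ} with hA
  have hAm : MeasurableSet A :=
    measurableSet_lt measurable_const hu.continuous.enorm.measurable
  set φ : E → ℝ≥0∞ := A.indicator (fun w => ‖fderiv ℝ u w‖ₑ) with hφ
  have hφm : Measurable φ :=
    ((hu.continuous_fderiv one_ne_zero).enorm.measurable).indicator hAm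
  set B : Set E := Metric.ball 0 h with hB
  have hBm : MeasurableSet B := Metric.isOpen_ball.measurableSet
  have hm3 : Measurable fun q : (E × E) × ℝ => φ (q.1.1 + q.2 • q.1.2) :=
    hφm.comp (by fun_prop : Continuous fun q : (E × E) × ℝ => q.1.1 + q.2 • q.1.2).measurable
  have hm2 : Measurable fun q : E × E => ∫⁻ s in Ioc (0 : ℝ) 1, φ (q.1 + s • q.2) :=
    hm3.lintegral_prod_right'
  have hpt : ∀ x, T * (‖u x‖ₑ - l) ≤
      ENNReal.ofReal h * ∫⁻ z in B, (∫⁻ s in Ioc (0 : ℝ) 1, φ (x + s • z)) ∂μ := by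
    intro x
    -- the displacements in `B` that end outside the superlevel set
    set D : Set E := B ∩ {z | ‖u (x + z)‖ₑ ≤ l} with hD
    have hDm : MeasurableSet D := hBm.inter (measurableSet_le
      (hu.continuous.comp (continuous_const.add continuous_id)).enorm.measurable measurable_const)
    have hDT : T ≤ μ D := by
      have h1 : μ B ≤ μ D + μ ((fun z => x + z) ⁻¹' A) := by
        refine (measure_mono ?_).trans (measure_union_le _ _)
        intro z hz
        by_cases hc : ‖u (x + z)‖ₑ ≤ l
        · exact Or.inl ⟨hz, hc⟩
        · exact Or.inr (not_le.1 hc)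
      rw [measure_preimage_add, hball, two_mul] at h1
      exact (ENNReal.add_le_add_iff_right hT).1 (h1.trans (by gcongr))
    calc T * (‖u x‖ₑ - l) ≤ μ D * (‖u x‖ₑ - l) := by gcongr
      _ = ∫⁻ z in D, (‖u x‖ₑ - l) ∂μ := by simp [mul_comm]
      _ ≤ ∫⁻ z in D, ENNReal.ofReal h * (∫⁻ s in Ioc (0 : ℝ) 1, φ (x + s • z)) ∂μ := by
          refine setLIntegral_mono' hDm fun z hz => (chord_le hu l x z hz.2).trans ?_
          gcongr
          rw [← ofReal_norm]
          apply ENNReal.ofReal_le_ofReal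
          have := hz.1
          rw [hB, mem_ball_zero_iff] at this
          exact this.le
      _ ≤ ∫⁻ z in B, ENNReal.ofReal h * (∫⁻ s in Ioc (0 : ℝ) 1, φ (x + s • z)) ∂μ :=
          lintegral_mono_set inter_subset_left
      _ = _ := lintegral_const_mul' _ _ ENNReal.ofReal_ne_top
  have key : T * ∫⁻ x, (‖u x‖ₑ - l) ∂μ ≤
      T * (2 * ENNReal.ofReal h * ∫⁻ x in A, ‖fderiv ℝ u x‖ₑ ∂μ) := by
    rw [← lintegral_const_mul' _ _ hT]
    calc _ ≤ ∫⁻ x, ENNReal.ofReal h *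
            (∫⁻ z in B, (∫⁻ s in Ioc (0 : ℝ) 1, φ (x + s • z)) ∂μ) ∂μ := lintegral_mono hpt
      _ = ENNReal.ofReal h *
            ∫⁻ z in B, (∫⁻ x, (∫⁻ s in Ioc (0 : ℝ) 1, φ (x + s • z)) ∂μ) ∂μ := by
          rw [lintegral_const_mul' _ _ ENNReal.ofReal_ne_top, lintegral_lintegral_swap]
          exact hm2.aemeasurable
      _ = ENNReal.ofReal h * ∫⁻ z in B, (∫⁻ x, φ x ∂μ) ∂μ := by
          congr 1
          refine lintegral_congr fun z => ?_
          rw [lintegral_lintegral_swap]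
          · have : ∀ s : ℝ, ∫⁻ x, φ (x + s • z) ∂μ = ∫⁻ x, φ x ∂μ :=
              fun s => lintegral_add_right_eq_self φ (s • z)
            simp [this]
          · exact (hφm.comp (by fun_prop :
              Continuous fun q : E × ℝ => q.1 + q.2 • z).measurable).aemeasurable
      _ = _ := by
          rw [hφ, lintegral_indicator hAm]
          simp only [lintegral_const, Measure.restrict_apply_univ, hball]
          ring
  exact (ENNReal.mul_le_mul_iff_right hT0 hT).1 key

/-- The first-order estimate `u** - u* ≤ C t^{1/n} |∇u|**`, for vector-valued `u` so that it applies
to every iterated derivative. -/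
theorem osc_le_dst_fderiv {E : Type*} [NormedAddCommGroup E] [NormedSpace ℝ E] [Nontrivial E]
    [FiniteDimensional ℝ E] [MeasurableSpace E] [BorelSpace E]
    (μ : Measure E) [μ.IsAddHaarMeasure] :
    ∃ C : ℝ, 0 < C ∧ ∀ (F : Type) [NormedAddCommGroup F] [NormedSpace ℝ F] [CompleteSpace F],
      ∀ u : E → F, ContDiff ℝ 1 u → ∀ t : ℝ, 0 < t →
      dst μ (fun x => ‖u x‖ₑ) t - rearr μ (fun x => ‖u x‖ₑ) t ≤
        ENNReal.ofReal (C * t ^ (1 / (Module.finrank ℝ E : ℝ))) *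
          dst μ (fun x => ‖fderiv ℝ u x‖ₑ) t := by
  set d : ℝ := (Module.finrank ℝ E : ℝ) with hd
  have hd0 : 0 < d := by
    rw [hd]; exact_mod_cast Module.finrank_pos (R := ℝ) (M := E)
  set om : ℝ := μ.real (Metric.ball (0 : E) 1) with hom
  have hom0 : 0 < om := ENNReal.toReal_pos (Metric.measure_ball_pos μ 0 one_pos).ne'
    measure_ball_lt_top.ne
  have homE : μ (Metric.ball (0 : E) 1) = ENNReal.ofReal om :=
    (ENNReal.ofReal_toReal measure_ball_lt_top.ne).symm
  refine ⟨2 * (2 / om) ^ (1 / d), by positivity, ?_⟩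
  intro F _ _ _ u hu t ht
  set g : E → ℝ≥0∞ := fun x => ‖u x‖ₑ with hg
  have hgm : Measurable g := hu.continuous.enorm.measurable
  have hgm' : Measurable fun x => ‖fderiv ℝ u x‖ₑ :=
    (hu.continuous_fderiv one_ne_zero).enorm.measurable
  set l := rearr μ g t with hl
  have hlE : μ {w | l < ‖u w‖ₑ} ≤ ENNReal.ofReal t := by
    by_contra! hc
    exact lt_irrefl _ (lt_rearr_iff.2 hc)
  -- the radius for which the ball has measure `2 * t`
  set h : ℝ := (2 / om) ^ (1 / d) * t ^ (1 / d) with hh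
  have hh0 : 0 < h := by positivity
  have hball : μ (Metric.ball (0 : E) h) = 2 * ENNReal.ofReal t := by
    rw [Measure.addHaar_ball_of_pos μ 0 hh0, homE, ← ENNReal.ofReal_mul (by positivity)]
    rw [show (2 : ℝ≥0∞) = ENNReal.ofReal 2 by simp, ← ENNReal.ofReal_mul (by norm_num)]
    congr 1
    rw [hh, ← Real.mul_rpow (by positivity) ht.le, ← Real.rpow_natCast,
      ← Real.rpow_mul (by positivity), ← hd, one_div_mul_cancel hd0.ne', Real.rpow_one]
    field_simp
  have hP := poincare_aux μ hu l ENNReal.ofReal_ne_top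
    (by simpa using ht) hball hlE
  calc _ ≤ ENNReal.ofReal (1 / t) * ∫⁻ x, (g x - l) ∂μ := osc_le μ hgm ht
    _ ≤ ENNReal.ofReal (1 / t) * (2 * ENNReal.ofReal h *
          ∫⁻ s in Ioc (0 : ℝ) t, rearr μ (fun x => ‖fderiv ℝ u x‖ₑ) s) := by
        gcongr
        refine hP.trans ?_
        gcongr
        exact setLIntegral_le_rearr μ hgm' hlE
    _ = _ := by
        rw [dst, show 2 * (2 / om) ^ (1 / d) * t ^ (1 / d) = 2 * h by rw [hh]; ring,
          ENNReal.ofReal_mul (p := 2) (q := h) (by norm_num)]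
        simp only [ENNReal.ofReal_ofNat]
        ring

/-! ### Weighted norms and a discrete Hardy inequality -/

theorem measurable_dst {α : Type*} [MeasurableSpace α] (μ : Measure α) (g : α → ℝ≥0∞) :
    Measurable (dst μ g) := by
  have h1 : Monotone fun t : ℝ => ∫⁻ s in Ioc (0 : ℝ) t, rearr μ g s :=
    fun s t hst => lintegral_mono_set (Ioc_subset_Ioc_right hst)
  exact (ENNReal.measurable_ofReal.comp (by fun_prop)).mul h1.measurable

/-- Minkowski's inequality for countably many nonnegative summands. -/
theorem minkowski_tsum {α : Type*} [MeasurableSpace α] (μ : Measure α) {p : ℝ} (hp : 1 ≤ p)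
    {f : ℕ → α → ℝ≥0∞} (hf : ∀ i, Measurable (f i)) :
    (∫⁻ x, (∑' i, f i x) ^ p ∂μ) ^ (1 / p) ≤ ∑' i, (∫⁻ x, f i x ^ p ∂μ) ^ (1 / p) := by
  have hp0 : 0 < p := by linarith
  have hN : ∀ N : ℕ, (∫⁻ x, (∑ i ∈ Finset.range N, f i x) ^ p ∂μ) ^ (1 / p)
      ≤ ∑' i, (∫⁻ x, f i x ^ p ∂μ) ^ (1 / p) := by
    intro N
    refine le_trans ?_ (ENNReal.sum_le_tsum (Finset.range N))
    have h := eLpNorm'_sum_le (μ := μ) (f := f) (s := Finset.range N) (q := p)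
      (fun i _ => (hf i).aestronglyMeasurable) hp
    simpa [eLpNorm'] using h
  have hsup : ∀ x, (∑' i, f i x) ^ p = ⨆ N : ℕ, (∑ i ∈ Finset.range N, f i x) ^ p := by
    intro x
    rw [ENNReal.tsum_eq_iSup_nat]
    exact (ENNReal.orderIsoRpow p hp0).map_iSup _
  simp_rw [hsup]
  rw [lintegral_iSup]
  · rw [one_div, ENNReal.rpow_inv_le_iff hp0]
    refine iSup_le fun N => ?_
    rw [← ENNReal.rpow_inv_le_iff hp0, ← one_div]
    exact hN N
  · intro N
    exact (Finset.measurable_sum _ fun i _ => hf i).pow_const p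
  · intro N M hNM x
    dsimp only
    gcongr

/-- The weighted norm `(∫_0^∞ (t^a g(t))^p dt)^{1/p}`. -/
def wN (p a : ℝ) (g : ℝ → ℝ≥0∞) : ℝ≥0∞ :=
  (∫⁻ t in Ioi (0 : ℝ), (ENNReal.ofReal t ^ a * g t) ^ p) ^ (1 / p)

theorem lintegral_comp_mul {c : ℝ} (hc : 0 < c) {F : ℝ → ℝ≥0∞} (hF : Measurable F) :
    ∫⁻ t in Ioi (0 : ℝ), F (c * t) = ENNReal.ofReal c⁻¹ * ∫⁻ t in Ioi (0 : ℝ), F t := by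
  have h1 : ∀ t : ℝ, (Ioi (0 : ℝ)).indicator (fun t => F (c * t)) t
      = (Ioi (0 : ℝ)).indicator F (c * t) := by
    intro t
    by_cases ht : 0 < t
    · rw [indicator_of_mem (show t ∈ Ioi (0 : ℝ) from ht),
        indicator_of_mem (show c * t ∈ Ioi (0 : ℝ) from mul_pos hc ht)]
    · have h2 : ¬ 0 < c * t := by
        rw [mul_pos_iff_of_pos_left hc]; exact ht
      rw [indicator_of_notMem (show t ∉ Ioi (0 : ℝ) from ht),
        indicator_of_notMem (show c * t ∉ Ioi (0 : ℝ) from h2)]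
  rw [← lintegral_indicator measurableSet_Ioi, ← lintegral_indicator measurableSet_Ioi]
  simp_rw [h1]
  rw [← lintegral_map (hF.indicator measurableSet_Ioi) (measurable_const_mul c),
    Real.map_volume_mul_left hc.ne', lintegral_smul_measure, abs_of_pos (inv_pos.2 hc)]
  rfl

/-- Change of variables `t ↦ c t` in the weighted norm; the exponent `-(a + 1/p)` is what makes the
dyadic sum in `hardy_discrete` converge. -/
theorem wN_scale {p : ℝ} (hp : 0 < p) (a : ℝ) {c : ℝ} (hc : 0 < c) {g : ℝ → ℝ≥0∞}
    (hg : Measurable g) :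
    wN p a (fun t => g (c * t)) = ENNReal.ofReal (c ^ (-(a + 1 / p))) * wN p a g := by
  have hm : Measurable fun t : ℝ => (ENNReal.ofReal t ^ a * g t) ^ p :=
    ((ENNReal.measurable_ofReal.pow_const a).mul hg).pow_const p
  have h1 : ∫⁻ t in Ioi (0 : ℝ), (ENNReal.ofReal t ^ a * g (c * t)) ^ p
      = ENNReal.ofReal (c ^ (-a * p)) *
        ∫⁻ t in Ioi (0 : ℝ), (ENNReal.ofReal (c * t) ^ a * g (c * t)) ^ p := by
    rw [← lintegral_const_mul' _ _ ENNReal.ofReal_ne_top]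
    refine setLIntegral_congr_fun measurableSet_Ioi fun t ht => ?_
    have ht' : 0 < t := ht
    rw [Real.rpow_mul hc.le, ← ENNReal.ofReal_rpow_of_nonneg (by positivity) hp.le,
      ← ENNReal.mul_rpow_of_nonneg _ _ hp.le, ← mul_assoc,
      ENNReal.ofReal_rpow_of_pos ht', ENNReal.ofReal_rpow_of_pos (mul_pos hc ht'),
      ← ENNReal.ofReal_mul (by positivity), Real.mul_rpow hc.le ht'.le, ← mul_assoc,
      ← Real.rpow_add hc]
    simp
  unfold wN
  rw [h1, lintegral_comp_mul hc hm, ← mul_assoc, ← ENNReal.ofReal_mul (by positivity),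
    ENNReal.mul_rpow_of_nonneg _ _ (by positivity)]
  congr 1
  rw [ENNReal.ofReal_rpow_of_pos (by positivity)]
  congr 1
  rw [← Real.rpow_neg_one, ← Real.rpow_add hc, ← Real.rpow_mul hc.le]
  congr 1
  field_simp
  ring

theorem wN_mono {p : ℝ} (hp : 0 < p) (a : ℝ) {g h : ℝ → ℝ≥0∞} (hgh : ∀ t > 0, g t ≤ h t) :
    wN p a g ≤ wN p a h := by
  unfold wN
  gcongr ?_ ^ _
  refine setLIntegral_mono' measurableSet_Ioi fun t ht => ?_
  gcongr
  exact hgh t ht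

theorem wN_const_mul {p : ℝ} (hp : 0 < p) (a : ℝ) {K : ℝ≥0∞} (hK : K ≠ ∞) (g : ℝ → ℝ≥0∞) :
    wN p a (fun t => K * g t) = K * wN p a g := by
  unfold wN
  have : ∀ t, (ENNReal.ofReal t ^ a * (K * g t)) ^ p = K ^ p * (ENNReal.ofReal t ^ a * g t) ^ p := by
    intro t
    rw [← ENNReal.mul_rpow_of_nonneg _ _ hp.le]
    congr 1; ring
  simp_rw [this]
  rw [lintegral_const_mul' _ _ (ENNReal.rpow_ne_top_of_nonneg hp.le hK),
    ENNReal.mul_rpow_of_nonneg _ _ (by positivity), ← ENNReal.rpow_mul, mul_one_div_cancel hp.ne',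
    ENNReal.rpow_one]

theorem wN_rpow_mul {p : ℝ} (a b : ℝ) (g : ℝ → ℝ≥0∞) :
    wN p a (fun t => ENNReal.ofReal (t ^ b) * g t) = wN p (a + b) g := by
  unfold wN
  congr 1
  refine setLIntegral_congr_fun measurableSet_Ioi fun t ht => ?_
  have ht' : 0 < t := ht
  dsimp only
  rw [← mul_assoc, ENNReal.ofReal_rpow_of_pos ht', ← ENNReal.ofReal_mul (by positivity),
    ← Real.rpow_add ht', ENNReal.ofReal_rpow_of_pos ht']

/-- A discrete Hardy inequality: dyadic sums over the dilates of `h` are bounded in the weighted norm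
as soon as `a > -1/p`, because the dilation norms form a convergent geometric series. -/
theorem hardy_discrete {p : ℝ} (hp : 1 < p) {a : ℝ} (ha : 0 < a + 1 / p) :
    ∃ K : ℝ≥0∞, K ≠ ∞ ∧ ∀ g h : ℝ → ℝ≥0∞, Measurable h →
      (∀ t > 0, g t ≤ ∑' i : ℕ, h (2 ^ (i + 1) * t)) → wN p a g ≤ K * wN p a h := by
  have hp0 : 0 < p := by linarith
  set r : ℝ := 2 ^ (-(a + 1 / p)) with hr
  have hr0 : 0 < r := by positivity
  have hr1 : r < 1 := Real.rpow_lt_one_of_one_lt_of_neg one_lt_two (by linarith)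
  refine ⟨∑' i : ℕ, ENNReal.ofReal r ^ (i + 1), ?_, ?_⟩
  · rw [ENNReal.tsum_geometric_add_one]
    refine ENNReal.mul_ne_top ENNReal.ofReal_ne_top ?_
    rw [ENNReal.inv_ne_top]
    refine (tsub_pos_of_lt ?_).ne'
    simpa using hr1
  · intro g h hh hgh
    refine (wN_mono hp0 a hgh).trans ?_
    rw [← ENNReal.tsum_mul_right]
    have h1 : wN p a (fun t => ∑' i : ℕ, h (2 ^ (i + 1) * t))
        ≤ ∑' i : ℕ, wN p a (fun t => h (2 ^ (i + 1) * t)) := by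
      unfold wN
      simp_rw [← ENNReal.tsum_mul_left]
      refine minkowski_tsum _ hp.le fun i => ?_
      exact (ENNReal.measurable_ofReal.pow_const a).mul (hh.comp (measurable_const_mul _))
    refine h1.trans (ENNReal.tsum_le_tsum fun i => le_of_eq ?_)
    rw [wN_scale hp0 a (by positivity) hh, ← ENNReal.ofReal_pow hr0.le]
    congr 2
    rw [hr, ← Real.rpow_natCast, ← Real.rpow_natCast, ← Real.rpow_mul (by norm_num),
      ← Real.rpow_mul (by norm_num)]
    congr 1; ring

theorem dstarR_norm {α F : Type*} [MeasurableSpace α] [NormedAddCommGroup F] (μ : Measure α)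
    (u : α → F) : dstarR μ (fun x => ‖u x‖) = dst μ (fun x => ‖u x‖ₑ) := by
  funext t
  simp [dstarR, dst, rearrR]

/-! ### Higher order -/

/-- Iterating the first-order estimate: each step lowers the order of the derivative by one and
the exponent of the weight by `1/n`. -/
theorem wN_iterate (n : ℕ) (hn : 2 ≤ n) (p : ℝ) (hp : 1 < p)
    (k : ℕ) (hkn : (k : ℝ) < n / p + 1) (m : ℕ) (hm : m < k) :
    ∃ K : ℝ≥0∞, K ≠ ∞ ∧
      ∀ f : EuclideanSpace ℝ (Fin n) → ℝ, ContDiff ℝ (k : ℕ∞) f →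
        (∀ j ≤ k, ∀ t > 0, dst volume (fun x => ‖iteratedFDeriv ℝ j f x‖ₑ) t ≠ ∞) →
        (∀ j < k, Tendsto (dst volume (fun x => ‖iteratedFDeriv ℝ j f x‖ₑ)) atTop (𝓝 0)) →
        wN p (-(m / n : ℝ)) (dst volume (fun x => ‖iteratedFDeriv ℝ (k - m) f x‖ₑ)) ≤
          K * wN p 0 (dst volume (fun x => ‖iteratedFDeriv ℝ k f x‖ₑ)) := by
  have : NeZero n := ⟨by omega⟩
  have hn0 : (0 : ℝ) < n := by exact_mod_cast (by omega : 0 < n)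
  have hp0 : 0 < p := by linarith
  induction m with
  | zero => exact ⟨1, by simp, fun f _ _ _ => by simp⟩
  | succ m ih =>
    obtain ⟨K, hK, hKf⟩ := ih (by omega)
    obtain ⟨C, hC0, hC⟩ := osc_le_dst_fderiv (volume : Measure (EuclideanSpace ℝ (Fin n)))
    have ha : 0 < -(((m + 1 : ℕ) : ℝ) / n) + 1 / p := by
      have h1 : ((m + 1 : ℕ) : ℝ) + 1 ≤ k := by exact_mod_cast hm
      have h2 : ((m + 1 : ℕ) : ℝ) < n / p := by linarith
      have h3 : ((m + 1 : ℕ) : ℝ) / n < 1 / p := by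
        rw [div_lt_iff₀ hn0]
        calc _ < (n : ℝ) / p := h2
          _ = _ := by ring
      linarith
    obtain ⟨K', hK', hH⟩ := hardy_discrete hp ha
    refine ⟨K' * (ENNReal.ofReal C * K), ENNReal.mul_ne_top hK'
      (ENNReal.mul_ne_top ENNReal.ofReal_ne_top hK), fun f hf hfin hlim => ?_⟩
    set j := k - (m + 1) with hj
    have hj1 : k - m = j + 1 := by omega
    have hu : ContDiff ℝ 1 (iteratedFDeriv ℝ j f) := by
      refine hf.iteratedFDeriv_right ?_
      exact_mod_cast (by omega : 1 + j ≤ k)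
    have hder : (fun x => ‖fderiv ℝ (iteratedFDeriv ℝ j f) x‖ₑ)
        = fun x => ‖iteratedFDeriv ℝ (k - m) f x‖ₑ := by
      funext x
      rw [hj1, ← ofReal_norm, norm_fderiv_iteratedFDeriv, ofReal_norm]
    set G := dst volume (fun x => ‖iteratedFDeriv ℝ (k - m) f x‖ₑ) with hG
    have hosc : ∀ t > 0, dst volume (fun x => ‖iteratedFDeriv ℝ j f x‖ₑ) t
        - rearr volume (fun x => ‖iteratedFDeriv ℝ j f x‖ₑ) t ≤
        ENNReal.ofReal C * (ENNReal.ofReal (t ^ (1 / (n : ℝ))) * G t) := by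
      intro t ht
      have := hC _ _ hu t ht
      rw [hder, finrank_euclideanSpace_fin, ENNReal.ofReal_mul hC0.le, mul_assoc] at this
      exact this
    have hGm : Measurable G := measurable_dst _ _
    have h1 := hH (dst volume (fun x => ‖iteratedFDeriv ℝ j f x‖ₑ))
      (fun t => ENNReal.ofReal C * (ENNReal.ofReal (t ^ (1 / (n : ℝ))) * G t))
      (((ENNReal.measurable_ofReal.comp (measurable_id.pow_const _)).mul hGm).const_mul _)
      (fun t ht => (dst_le_tsum volume _ (hfin j (by omega)) (hlim j (by omega)) ht).trans
        (ENNReal.tsum_le_tsum fun i => hosc _ (by positivity)))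
    rw [wN_const_mul hp0 _ ENNReal.ofReal_ne_top, wN_rpow_mul] at h1
    have h2 : -(((m + 1 : ℕ) : ℝ) / n) + 1 / (n : ℝ) = -(m / n : ℝ) := by
      push_cast; ring
    rw [h2] at h1
    refine h1.trans ?_
    rw [mul_assoc, mul_assoc]
    gcongr
    exact hKf f hf hfin hlim

/-- The Sobolev-type embedding `V^{k,p}(ℝⁿ) → S^p(t^{−kp/n})(ℝⁿ)`:
`(∫_0^∞ (f**−f*)^p t^{−kp/n} dt)^{1/p} ≤ C (∫_0^∞ (|∇^k f|**)^p dt)^{1/p}`. -/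
theorem sobolev_embedding_into_S
    (n : ℕ) (hn : 2 ≤ n) (p : ℝ) (hp : 1 < p) (hpn : p < n)
    (k : ℕ) (hk : 2 ≤ k) (hkn : (k : ℝ) < n / p + 1) :
    ∃ C : ℝ, 0 < C ∧
      ∀ f : EuclideanSpace ℝ (Fin n) → ℝ, ContDiff ℝ (k : ℕ∞) f →
        (∀ j ≤ k, ∀ t > 0,
          dstarR volume (fun x => ‖iteratedFDeriv ℝ j f x‖) t ≠ ∞) →
        (∀ j < k,
          Tendsto (dstarR volume (fun x => ‖iteratedFDeriv ℝ j f x‖)) atTop (𝓝 0)) →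
        (∫⁻ t in Ioi (0 : ℝ),
            oscR volume f t ^ p * ENNReal.ofReal t ^ (-((k : ℝ) * p / n))) ^ (1 / p)
          ≤ ENNReal.ofReal C *
              (∫⁻ t in Ioi (0 : ℝ),
                dstarR volume (fun x => ‖iteratedFDeriv ℝ k f x‖) t ^ p) ^ (1 / p) := by
  have : NeZero n := ⟨by omega⟩
  have hn0 : (0 : ℝ) < n := by exact_mod_cast (by omega : 0 < n)
  have hp0 : 0 < p := by linarith
  obtain ⟨K, hK, hKf⟩ := wN_iterate n hn p hp k hkn (k - 1) (by omega)
  obtain ⟨C, hC0, hC⟩ := osc_le_dst_fderiv (volume : Measure (EuclideanSpace ℝ (Fin n)))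
  -- the summand `1` makes the constant positive even when `K = 0`
  refine ⟨C * (K.toReal + 1), by positivity, fun f hf hfin hlim => ?_⟩
  simp only [dstarR_norm] at hfin hlim ⊢
  have hmain := hKf f hf hfin hlim
  rw [show k - (k - 1) = 1 by omega] at hmain
  have hder : (fun x => ‖fderiv ℝ f x‖ₑ) = fun x => ‖iteratedFDeriv ℝ 1 f x‖ₑ := by
    funext x
    rw [← ofReal_norm, ← ofReal_norm, norm_iteratedFDeriv_one]
  have hu : ContDiff ℝ 1 f := hf.of_le (by exact_mod_cast (by omega : 1 ≤ k))
  set G := dst volume (fun x => ‖iteratedFDeriv ℝ 1 f x‖ₑ) with hG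
  have hosc : ∀ t > 0, oscR volume f t ≤
      ENNReal.ofReal C * (ENNReal.ofReal (t ^ (1 / (n : ℝ))) * G t) := by
    intro t ht
    have := hC _ f hu t ht
    rw [hder, finrank_euclideanSpace_fin, ENNReal.ofReal_mul hC0.le, mul_assoc] at this
    have h2 : oscR volume f t
        = dst volume (fun x => ‖f x‖ₑ) t - rearr volume (fun x => ‖f x‖ₑ) t := by
      simp only [oscR, dstarR, rearrR, dst, Real.enorm_eq_ofReal_abs]
    rw [h2]
    exact this
  have hL : (∫⁻ t in Ioi (0 : ℝ),
      oscR volume f t ^ p * ENNReal.ofReal t ^ (-((k : ℝ) * p / n))) ^ (1 / p)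
      = wN p (-((k : ℝ) / n)) (oscR volume f) := by
    unfold wN
    congr 1
    refine lintegral_congr fun t => ?_
    rw [ENNReal.mul_rpow_of_nonneg _ _ hp0.le, ← ENNReal.rpow_mul, mul_comm]
    congr 2
    ring
  have hR : (∫⁻ t in Ioi (0 : ℝ),
      dst volume (fun x => ‖iteratedFDeriv ℝ k f x‖ₑ) t ^ p) ^ (1 / p)
      = wN p 0 (dst volume (fun x => ‖iteratedFDeriv ℝ k f x‖ₑ)) := by
    simp [wN]
  rw [hL, hR]
  calc _ ≤ wN p (-((k : ℝ) / n))
          (fun t => ENNReal.ofReal C * (ENNReal.ofReal (t ^ (1 / (n : ℝ))) * G t)) :=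
        wN_mono hp0 _ hosc
    _ = ENNReal.ofReal C * wN p (-(((k - 1 : ℕ) : ℝ) / n)) G := by
        rw [wN_const_mul hp0 _ ENNReal.ofReal_ne_top, wN_rpow_mul]
        congr 2
        rw [Nat.cast_sub (by omega)]
        push_cast; ring
    _ ≤ ENNReal.ofReal C *
          (K * wN p 0 (dst volume (fun x => ‖iteratedFDeriv ℝ k f x‖ₑ))) := by gcongr
    _ ≤ _ := by
        rw [← mul_assoc, ENNReal.ofReal_mul hC0.le]
        gcongr
        exact ENNReal.le_ofReal_iff_toReal_le hK (by positivity) |>.2 (by linarith)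

end
end

section
/- Let p0 ∈ (0,∞), let w0 be a weight on (0,∞) with φ0(t) = (∫_0^t w0(s) ds)^{1/p0} ∈ (0,∞) for all t > 0, and let φ1 : (0,∞) → (0,∞) be non-decreasing. Suppose there exists C > 0 such that ∫_0^t φ1(s)^{−p0} w0(s) ds ≤ C·φ0(t)^{p0}·φ1(t)^{−p0} for all t > 0. Then there exist ε0 ∈ (0,1) and constants 0 < c1 ≤ c2 such that for all t > 0: c1·φ0(t)^{p0(1−ε0)}·φ1(t)^{−p0} ≤ ∫_0^t φ0(s)^{−ε0 p0}·φ1(s)^{−p0}·w0(s) ds ≤ c2·φ0(t)^{p0(1−ε0)}·φ1(t)^{−p0}. -/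
/-!
Write `W t = ∫₀ᵗ w₀ = φ₀(t)^p₀`, `u = φ₁^(-p₀)`, which is non-increasing, and `V t = ∫₀ᵗ u w₀`.
The hypothesis reads `V ≤ C W u`, where one may take `C ≥ 1`, and the quantity to be estimated is
`∫₀ᵗ W^(-ε) u w₀`.

The lower bound holds with constant `1` since `W^(-ε) u` is non-increasing.

For the upper bound, `W` is continuous, so every `t` has a point `s < t` with `W s = W t / 2`
(`exists_half`). On `(s, t]` the mass of `w₀` is `W t / 2` and `u ≥ u t`, so
`V t - V s ≥ u t * W t / 2 ≥ V t / (2C)`, i.e. `V s ≤ (1 - ε) V t` with `ε = 1 / (2C)`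
(`decay_step`). Iterating gives points `s k` decreasing to `0` along which `V` decays like
`(1 - ε)^k`, while `W^(-ε)` grows only like `2^(ε k) ≤ (1 + ε)^k`. The contributions of the pieces
`(s (k+1), s k]` are thus dominated by a geometric series of ratio `1 - ε²`, whose sum is a multiple
of `W(t)^(-ε) V t ≤ C W(t)^(1-ε) u t`.
-/

open MeasureTheory Set Filter Topology
open scoped ENNReal

noncomputable section

/-- The primitive of `w` attains half of its value at an earlier point, by continuity. -/
lemma exists_half (w : ℝ → ℝ≥0∞) (hw : Measurable w)
    (hW : ∀ t > 0, (∫⁻ s in Ioc (0 : ℝ) t, w s) ≠ 0 ∧ (∫⁻ s in Ioc (0 : ℝ) t, w s) ≠ ∞)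
    (t : ℝ) (ht : 0 < t) :
    ∃ s, 0 < s ∧ s ≤ t ∧
      (∫⁻ x in Ioc (0 : ℝ) s, w x) = 2⁻¹ * ∫⁻ x in Ioc (0 : ℝ) t, w x := by
  have hI : IntegrableOn (fun x => (w x).toReal) (Ioc 0 t) :=
    integrable_toReal_of_lintegral_ne_top hw.aemeasurable (hW t ht).2
  have hcont := intervalIntegral.continuousOn_primitive 
    ((integrableOn_Icc_iff_integrableOn_Ioc (by simp)).2 hI)
  have heq : ∀ s > 0, (∫ x in Ioc 0 s, (w x).toReal) = (∫⁻ x in Ioc (0 : ℝ) s, w x).toReal :=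
    fun s hs => integral_toReal hw.aemeasurable (ae_lt_top hw (hW s hs).2)
  have hpos : 0 < (∫⁻ x in Ioc (0 : ℝ) t, w x).toReal :=
    ENNReal.toReal_pos (hW t ht).1 (hW t ht).2
  obtain ⟨s, ⟨hs0, hst⟩, hs⟩ := intermediate_value_Icc ht.le hcont
    (show (∫⁻ x in Ioc (0 : ℝ) t, w x).toReal / 2 ∈ _ by
      rw [heq t ht]
      simp only [Ioc_self, Measure.restrict_empty, integral_zero_measure, mem_Icc]
      constructor <;> linarith)
  have hs0' : 0 < s := by
    rcases hs0.eq_or_lt with rfl | h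
    · simp only [Ioc_self, Measure.restrict_empty, integral_zero_measure] at hs
      linarith
    · exact h
  refine ⟨s, hs0', hst, ?_⟩
  rw [← ENNReal.toReal_eq_toReal_iff' (hW s hs0').2
    (ENNReal.mul_ne_top (by simp) (hW t ht).2), ← heq s hs0', ENNReal.toReal_mul]
  simp only at hs
  rw [hs]
  simp
  ring

/-- Halving the mass of `w` shrinks `∫ u w` by the factor `1 - 1 / (2C)`. -/
lemma decay_step (w u : ℝ → ℝ≥0∞) (hw : Measurable w)
    (hu : AntitoneOn u (Ioi 0)) (huf : ∀ t > 0, u t ≠ ∞)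
    (hW : ∀ t > 0, (∫⁻ s in Ioc (0 : ℝ) t, w s) ≠ ∞)
    (C : ℝ) (hC : 1 ≤ C)
    (h : ∀ t > 0, (∫⁻ s in Ioc (0 : ℝ) t, u s * w s)
      ≤ ENNReal.ofReal C * ((∫⁻ s in Ioc (0 : ℝ) t, w s) * u t))
    (s t : ℝ) (hs : 0 < s) (hst : s ≤ t)
    (hhalf : (∫⁻ x in Ioc (0 : ℝ) s, w x) = 2⁻¹ * ∫⁻ x in Ioc (0 : ℝ) t, w x) :
    (∫⁻ x in Ioc (0 : ℝ) s, u x * w x)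
      ≤ ENNReal.ofReal (1 - 1 / (2 * C)) * ∫⁻ x in Ioc (0 : ℝ) t, u x * w x := by
  have ht : 0 < t := hs.trans_le hst
  have hVf : ∀ t > 0, (∫⁻ s in Ioc (0 : ℝ) t, u s * w s) ≠ ∞ := fun t ht =>
    ne_top_of_le_ne_top
      (ENNReal.mul_ne_top ENNReal.ofReal_ne_top (ENNReal.mul_ne_top (hW t ht) (huf t ht))) (h t ht)
  have split : ∀ f : ℝ → ℝ≥0∞, (∫⁻ x in Ioc (0 : ℝ) t, f x)
      = (∫⁻ x in Ioc (0 : ℝ) s, f x) + ∫⁻ x in Ioc s t, f x := fun f => by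
    rw [← Ioc_union_Ioc_eq_Ioc hs.le hst]
    exact lintegral_union measurableSet_Ioc (Ioc_disjoint_Ioc_of_le le_rfl)
  have hlow : u t * (∫⁻ x in Ioc s t, w x) ≤ ∫⁻ x in Ioc s t, u x * w x := by
    rw [← lintegral_const_mul _ hw]
    refine setLIntegral_mono' measurableSet_Ioc fun x hx => ?_
    gcongr
    exact hu (hs.trans hx.1) ht hx.2
  have h1 := split w
  have h2 := split (fun x => u x * w x)
  have h3 := h t ht
  have e1 := hW t ht
  have e2 := hW s hs
  have e3 := hVf t ht
  have e4 := hVf s hs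
  have e5 := huf t ht
  have e6 : (∫⁻ x in Ioc s t, w x) ≠ ∞ := ne_top_of_le_ne_top e1 (h1 ▸ le_add_self)
  have e7 : (∫⁻ x in Ioc s t, u x * w x) ≠ ∞ := ne_top_of_le_ne_top e3 (h2 ▸ le_add_self)
  generalize (∫⁻ x in Ioc (0 : ℝ) t, w x) = Wt at *
  generalize (∫⁻ x in Ioc (0 : ℝ) s, w x) = Ws at *
  generalize (∫⁻ x in Ioc s t, w x) = Wd at *
  generalize (∫⁻ x in Ioc (0 : ℝ) t, u x * w x) = Vt at *
  generalize (∫⁻ x in Ioc (0 : ℝ) s, u x * w x) = Vs at *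
  generalize (∫⁻ x in Ioc s t, u x * w x) = Vd at *
  generalize u t = ut at *
  -- All quantities are finite, so the inequality can be checked in the reals.
  have g1 := congrArg ENNReal.toReal h1
  have g2 := congrArg ENNReal.toReal h2
  have g0 := congrArg ENNReal.toReal hhalf
  have g3 := ENNReal.toReal_mono (by finiteness) h3
  have g4 := ENNReal.toReal_mono e7 hlow
  rw [ENNReal.toReal_add e2 e6] at g1
  rw [ENNReal.toReal_add e4 e7] at g2
  have hC0 : 0 ≤ C := by linarith
  simp only [ENNReal.toReal_mul, ENNReal.toReal_inv, ENNReal.toReal_ofNat,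
    ENNReal.toReal_ofReal hC0] at g0 g3 g4
  have hle : 1 / (2 * C) ≤ 1 := by rw [div_le_one (by positivity)]; linarith
  rw [← ENNReal.toReal_le_toReal e4 (by finiteness), ENNReal.toReal_mul,
    ENNReal.toReal_ofReal (by linarith)]
  have hd : Wd.toReal = Wt.toReal / 2 := by linarith
  rw [hd] at g4
  have key : 1 / (2 * C) * Vt.toReal ≤ Vd.toReal := by
    rw [one_div, inv_mul_le_iff₀ (by positivity)]
    nlinarith
  linarith

/-- The upper estimate with `ε = 1 / (2C)`, for an abstract non-increasing `u`: the pieces between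
consecutive halving points of `W` form a geometric series of ratio `1 - ε²`. -/
lemma upper_bound (w u : ℝ → ℝ≥0∞) (hw : Measurable w)
    (hu : AntitoneOn u (Ioi 0)) (huf : ∀ t > 0, u t ≠ ∞)
    (hW : ∀ t > 0, (∫⁻ s in Ioc (0 : ℝ) t, w s) ≠ 0 ∧ (∫⁻ s in Ioc (0 : ℝ) t, w s) ≠ ∞)
    (C : ℝ) (hC : 1 ≤ C)
    (h : ∀ t > 0, (∫⁻ s in Ioc (0 : ℝ) t, u s * w s)
      ≤ ENNReal.ofReal C * ((∫⁻ s in Ioc (0 : ℝ) t, w s) * u t))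
    (t : ℝ) (ht : 0 < t) :
    (∫⁻ s in Ioc (0 : ℝ) t, (∫⁻ x in Ioc (0 : ℝ) s, w x) ^ (-(1 / (2 * C))) * (u s * w s))
      ≤ ENNReal.ofReal (8 * C ^ 3) *
        ((∫⁻ x in Ioc (0 : ℝ) t, w x) ^ (1 - 1 / (2 * C)) * u t) := by
  set W : ℝ → ℝ≥0∞ := fun t => ∫⁻ x in Ioc (0 : ℝ) t, w x with hWdef
  set V : ℝ → ℝ≥0∞ := fun t => ∫⁻ x in Ioc (0 : ℝ) t, u x * w x with hVdef
  set ε : ℝ := 1 / (2 * C) with hε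
  have hε0 : 0 < ε := by positivity
  have hε1 : ε < 1 := by rw [hε, div_lt_one (by positivity)]; linarith
  have hWmono : Monotone W := fun a b hab => lintegral_mono_set (Ioc_subset_Ioc_right hab)
  choose! g hg0 hgt hgW using exists_half w hw hW
  let s : ℕ → ℝ := fun k => g^[k] t
  have hs_succ : ∀ k, s (k + 1) = g (s k) := fun k => Function.iterate_succ_apply' g k t
  have hs0 : ∀ k, 0 < s k := by
    intro k
    induction k with
    | zero => exact ht
    | succ k ih => rw [hs_succ]; exact hg0 _ ih
  have hsle : ∀ k, s (k + 1) ≤ s k := fun k => by rw [hs_succ]; exact hgt _ (hs0 k)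
  have hsW : ∀ k, W (s (k + 1)) = 2⁻¹ * W (s k) := fun k => by
    rw [hs_succ]; exact hgW _ (hs0 k)
  have hsV : ∀ k, V (s (k + 1)) ≤ ENNReal.ofReal (1 - ε) * V (s k) := fun k =>
    decay_step w u hw hu huf (fun t ht => (hW t ht).2) C hC h _ _ (hs0 _) (hsle k) (hsW k)
  have hWpow : ∀ k, W (s k) = 2⁻¹ ^ k * W t := by
    intro k
    induction k with
    | zero => simp [s]
    | succ k ih => rw [hsW, ih, pow_succ]; ring
  -- The points `s k` decrease to `0` because `W` vanishes in the limit but not at positive points.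
  have hlim : ∀ x > 0, ∃ k, s k < x := by
    intro x hx
    by_contra! hcon
    have h1 : Tendsto (fun k : ℕ => (2⁻¹ : ℝ≥0∞) ^ k * W t) atTop (𝓝 (0 * W t)) :=
      ENNReal.Tendsto.mul_const
        (ENNReal.tendsto_pow_atTop_nhds_zero_of_lt_one (by simp)) (Or.inr (hW t ht).2)
    rw [zero_mul] at h1
    have h2 : W x ≤ 0 := ge_of_tendsto' h1 fun k => by
      rw [← hWpow]; exact hWmono (hcon k)
    exact (hW x hx).1 (le_antisymm h2 (zero_le))
  have hcover : Ioc 0 t ⊆ ⋃ k, Ioc (s (k + 1)) (s k) := by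
    intro x hx
    have hex := hlim x hx.1
    classical
    have hf := Nat.find_spec hex
    rcases hn : Nat.find hex with _ | n
    · rw [hn] at hf
      exact absurd hx.2 (not_le.2 hf)
    · rw [hn] at hf
      exact mem_iUnion.2 ⟨n, hf, not_lt.1 (Nat.find_min hex (by omega))⟩
  set a : ℕ → ℝ≥0∞ := fun k => W (s k) ^ (-ε) * V (s k) with ha
  have hpow : ∀ k, W (s (k + 1)) ^ (-ε) = 2 ^ ε * W (s k) ^ (-ε) := fun k => by
    rw [hsW, ENNReal.mul_rpow_of_ne_top (by simp) (hW _ (hs0 k)).2, ENNReal.rpow_neg,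
      ENNReal.inv_rpow, inv_inv]
  have h2ε : (2 : ℝ≥0∞) ^ ε ≤ ENNReal.ofReal (1 + ε) := by
    have : (2 : ℝ≥0∞) = ENNReal.ofReal 2 := by simp
    rw [this, ENNReal.ofReal_rpow_of_pos (by norm_num)]
    apply ENNReal.ofReal_le_ofReal
    have := rpow_one_add_le_one_add_mul_self (s := 1) (by norm_num) hε0.le hε1.le
    norm_num at this
    exact this
  have hstep : ∀ k, a (k + 1) ≤ ENNReal.ofReal (1 - ε ^ 2) * a k := by
    intro k
    simp only [ha]
    rw [hpow]
    calc 2 ^ ε * W (s k) ^ (-ε) * V (s (k + 1))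
        ≤ ENNReal.ofReal (1 + ε) * W (s k) ^ (-ε) * (ENNReal.ofReal (1 - ε) * V (s k)) := by
          gcongr; exact hsV k
      _ = ENNReal.ofReal (1 - ε ^ 2) * (W (s k) ^ (-ε) * V (s k)) := by
          rw [show 1 - ε ^ 2 = (1 + ε) * (1 - ε) by ring, ENNReal.ofReal_mul (by linarith)]
          ring
  have ha_le : ∀ k, a k ≤ ENNReal.ofReal (1 - ε ^ 2) ^ k * a 0 := by
    intro k
    induction k with
    | zero => simp
    | succ k ih =>
      calc a (k + 1) ≤ ENNReal.ofReal (1 - ε ^ 2) * a k := hstep k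
        _ ≤ ENNReal.ofReal (1 - ε ^ 2) * (ENNReal.ofReal (1 - ε ^ 2) ^ k * a 0) := by gcongr
        _ = _ := by rw [pow_succ]; ring
  have hpiece : ∀ k, (∫⁻ x in Ioc (s (k + 1)) (s k), W x ^ (-ε) * (u x * w x)) ≤ 2 * a k := by
    intro k
    have hfin : W (s (k + 1)) ^ (-ε) ≠ ∞ :=
      ENNReal.rpow_ne_top_of_ne_zero (hW _ (hs0 _)).1 (hW _ (hs0 _)).2
    calc (∫⁻ x in Ioc (s (k + 1)) (s k), W x ^ (-ε) * (u x * w x))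
        ≤ ∫⁻ x in Ioc (s (k + 1)) (s k), W (s (k + 1)) ^ (-ε) * (u x * w x) := by
          refine setLIntegral_mono' measurableSet_Ioc fun x hx => ?_
          gcongr ?_ * _
          rw [ENNReal.rpow_neg, ENNReal.rpow_neg, ENNReal.inv_le_inv]
          exact ENNReal.rpow_le_rpow (hWmono hx.1.le) hε0.le
      _ = W (s (k + 1)) ^ (-ε) * ∫⁻ x in Ioc (s (k + 1)) (s k), u x * w x :=
          lintegral_const_mul' _ _ hfin
      _ ≤ W (s (k + 1)) ^ (-ε) * V (s k) := by
          gcongr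
          exact lintegral_mono_set (Ioc_subset_Ioc_left (hs0 _).le)
      _ = 2 ^ ε * a k := by rw [hpow, mul_assoc]
      _ ≤ 2 * a k := by
          gcongr
          calc (2 : ℝ≥0∞) ^ ε ≤ 2 ^ (1 : ℝ) :=
                ENNReal.rpow_le_rpow_of_exponent_le (by norm_num) hε1.le
            _ = 2 := ENNReal.rpow_one 2
  have hgeom : ∑' k, ENNReal.ofReal (1 - ε ^ 2) ^ k = ENNReal.ofReal (4 * C ^ 2) := by
    have hsq : 0 ≤ 1 - ε ^ 2 := by nlinarith
    rw [ENNReal.tsum_geometric, ← ENNReal.ofReal_one, ← ENNReal.ofReal_sub _ hsq,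
      ← ENNReal.ofReal_inv_of_pos (by nlinarith)]
    congr 1
    rw [sub_sub_cancel, hε]
    field_simp
    norm_num
  calc (∫⁻ x in Ioc 0 t, W x ^ (-ε) * (u x * w x))
      ≤ ∫⁻ x in ⋃ k, Ioc (s (k + 1)) (s k), W x ^ (-ε) * (u x * w x) :=
        lintegral_mono_set hcover
    _ ≤ ∑' k, ∫⁻ x in Ioc (s (k + 1)) (s k), W x ^ (-ε) * (u x * w x) :=
        lintegral_iUnion_le _ _
    _ ≤ ∑' k, 2 * (ENNReal.ofReal (1 - ε ^ 2) ^ k * a 0) :=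
        ENNReal.tsum_le_tsum fun k => (hpiece k).trans (by gcongr; exact ha_le k)
    _ = 2 * (ENNReal.ofReal (4 * C ^ 2) * a 0) := by
        rw [ENNReal.tsum_mul_left, ENNReal.tsum_mul_right, hgeom]
    _ ≤ 2 * (ENNReal.ofReal (4 * C ^ 2) *
          (W t ^ (-ε) * (ENNReal.ofReal C * (W t * u t)))) := by
        gcongr
        exact mul_le_mul_right (h t ht) _
    _ = ENNReal.ofReal (8 * C ^ 3) * (W t ^ (1 - ε) * u t) := by
        have hWadd : W t ^ (1 - ε) = W t ^ (-ε) * W t := by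
          rw [show 1 - ε = -ε + 1 by ring, ENNReal.rpow_add _ _ (hW t ht).1 (hW t ht).2,
            ENNReal.rpow_one]
        have hconst : ENNReal.ofReal (8 * C ^ 3)
            = 2 * (ENNReal.ofReal (4 * C ^ 2) * ENNReal.ofReal C) := by
          rw [show 8 * C ^ 3 = 2 * ((4 * C ^ 2) * C) by ring, ENNReal.ofReal_mul (by norm_num),
            ENNReal.ofReal_mul (by positivity), ENNReal.ofReal_ofNat]
        rw [hWadd, hconst]
        ring

/-- The iteration lemma: from the integral condition one extracts an `ε₀ ∈ (0,1)` for which a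
two-sided power-improved estimate holds. -/
theorem iteration_lemma
    (p₀ : ℝ) (hp₀ : 0 < p₀)
    (w₀ : ℝ → ℝ≥0∞) (hw₀ : Measurable w₀)
    (φ₀ : ℝ → ℝ≥0∞)
    (hφ₀def : ∀ t > 0, φ₀ t = (∫⁻ s in Ioc (0 : ℝ) t, w₀ s) ^ (1 / p₀))
    (hφ₀ : ∀ t > 0, φ₀ t ≠ 0 ∧ φ₀ t ≠ ∞)
    (φ₁ : ℝ → ℝ≥0∞)
    (hφ₁ : ∀ t > 0, φ₁ t ≠ 0 ∧ φ₁ t ≠ ∞)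
    (hφ₁mono : MonotoneOn φ₁ (Ioi (0 : ℝ)))
    (C : ℝ) (hC : 0 < C)
    (h : ∀ t > 0,
      (∫⁻ s in Ioc (0 : ℝ) t, φ₁ s ^ (-p₀) * w₀ s)
        ≤ ENNReal.ofReal C * (φ₀ t ^ p₀ * φ₁ t ^ (-p₀))) :
    ∃ ε₀ : ℝ, 0 < ε₀ ∧ ε₀ < 1 ∧
      ∃ c₁ c₂ : ℝ, 0 < c₁ ∧ c₁ ≤ c₂ ∧
        ∀ t > 0,
          ENNReal.ofReal c₁ * (φ₀ t ^ (p₀ * (1 - ε₀)) * φ₁ t ^ (-p₀))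
            ≤ (∫⁻ s in Ioc (0 : ℝ) t, φ₀ s ^ (-(ε₀ * p₀)) * φ₁ s ^ (-p₀) * w₀ s) ∧
          (∫⁻ s in Ioc (0 : ℝ) t, φ₀ s ^ (-(ε₀ * p₀)) * φ₁ s ^ (-p₀) * w₀ s)
            ≤ ENNReal.ofReal c₂ * (φ₀ t ^ (p₀ * (1 - ε₀)) * φ₁ t ^ (-p₀)) := by
  have hpne : p₀ ≠ 0 := hp₀.ne'
  set W : ℝ → ℝ≥0∞ := fun t => ∫⁻ x in Ioc (0 : ℝ) t, w₀ x with hWdef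
  have hφW : ∀ t > 0, ∀ r : ℝ, φ₀ t ^ (r * p₀) = W t ^ r := fun t ht r => by
    rw [hφ₀def t ht, ← ENNReal.rpow_mul]
    congr 1
    field_simp
  have hφW1 : ∀ t > 0, φ₀ t ^ p₀ = W t := fun t ht => by simpa using hφW t ht 1
  have hW : ∀ t > 0, W t ≠ 0 ∧ W t ≠ ∞ := fun t ht => by
    rw [← hφW1 t ht]
    exact ⟨(ENNReal.rpow_pos (pos_iff_ne_zero.2 (hφ₀ t ht).1) (hφ₀ t ht).2).ne',
      ENNReal.rpow_ne_top_of_nonneg hp₀.le (hφ₀ t ht).2⟩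
  have hWmono : Monotone W := fun a b hab => lintegral_mono_set (Ioc_subset_Ioc_right hab)
  set u : ℝ → ℝ≥0∞ := fun t => φ₁ t ^ (-p₀) with hudef
  have hu : AntitoneOn u (Ioi 0) := fun a ha b hb hab => by
    simp only [hudef, ENNReal.rpow_neg, ENNReal.inv_le_inv]
    exact ENNReal.rpow_le_rpow (hφ₁mono ha hb hab) hp₀.le
  have huf : ∀ t > 0, u t ≠ ∞ := fun t ht =>
    ENNReal.rpow_ne_top_of_ne_zero (hφ₁ t ht).1 (hφ₁ t ht).2
  set D : ℝ := max C 1 with hD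
  have hD1 : 1 ≤ D := le_max_right _ _
  have h' : ∀ t > 0, (∫⁻ s in Ioc (0 : ℝ) t, u s * w₀ s) ≤ ENNReal.ofReal D * (W t * u t) :=
    fun t ht => by
      refine (h t ht).trans ?_
      rw [hφW1 t ht]
      gcongr
      exact le_max_left _ _
  have hε0 : 0 < 1 / (2 * D) := by positivity
  have hε1 : 1 / (2 * D) < 1 := by rw [div_lt_one (by positivity)]; linarith
  refine ⟨1 / (2 * D), hε0, hε1, 1, 8 * D ^ 3, one_pos, ?_, fun t ht => ?_⟩
  · nlinarith [one_le_pow₀ hD1 (n := 3)]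
  have hI : (∫⁻ s in Ioc (0 : ℝ) t, φ₀ s ^ (-(1 / (2 * D) * p₀)) * φ₁ s ^ (-p₀) * w₀ s)
      = ∫⁻ s in Ioc (0 : ℝ) t, W s ^ (-(1 / (2 * D))) * (u s * w₀ s) :=
    setLIntegral_congr_fun measurableSet_Ioc fun s hs => by
      simp only [hudef]
      rw [← neg_mul, hφW s hs.1, mul_assoc]
  rw [hI, mul_comm p₀, hφW t ht]
  refine ⟨?_, upper_bound w₀ u hw₀ hu huf hW D hD1 h' t ht⟩
  calc ENNReal.ofReal 1 * (W t ^ (1 - 1 / (2 * D)) * u t)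
      = W t ^ (-(1 / (2 * D))) * u t * W t := by
        rw [show 1 - 1 / (2 * D) = -(1 / (2 * D)) + 1 by ring,
          ENNReal.rpow_add _ _ (hW t ht).1 (hW t ht).2, ENNReal.rpow_one, ENNReal.ofReal_one]
        ring
    _ = ∫⁻ s in Ioc (0 : ℝ) t, W t ^ (-(1 / (2 * D))) * u t * w₀ s :=
        (lintegral_const_mul _ hw₀).symm
    _ ≤ ∫⁻ s in Ioc (0 : ℝ) t, W s ^ (-(1 / (2 * D))) * (u s * w₀ s) := by
        refine setLIntegral_mono' measurableSet_Ioc fun s hs => ?_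
        rw [mul_assoc]
        gcongr ?_ * (?_ * _)
        · rw [ENNReal.rpow_neg, ENNReal.rpow_neg, ENNReal.inv_le_inv]
          exact ENNReal.rpow_le_rpow (hWmono hs.2) hε0.le
        · exact hu hs.1 ht hs.2


end
end
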